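/- arXiv:1308.1286 — 3 statements merged into one kernel-verified Lean document; each statement's English description precedes it below -/
import Mathlib

section
/- Let q be a prime power and F_{q^2} the field with q² elements; for P ∈ F_{q^2}[x], let P̄ denote the polynomial obtained by raising each coefficient of P to the q-th power. Let U_n(q) denote the set of monic polynomials P(x) ∈ F_{q^2}[x] of degree n such that P̄(x) = (−x)^n P(1/x), i.e., for every 0 ≤ i ≤ n the q-th power of the coefficient of x^i in P equals (−1)^n times the coefficient of x^{n−i} in P. For every k > 0 there exists N such that for every integer n ≥ 2 and every prime power q, the number of P ∈ U_n(q) that split into more than N·log n monic irreducible factors over F_{q^2}[x] (counted with multiplicity) is at most n^{−k} · |U_n(q)|. -/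
open Polynomial UniqueFactorizationMonoid

/-! ### Counting irreducible factors -/

section Length

variable {K : Type*} [Field K]

/-- The number of irreducible factors of a polynomial, counted with multiplicity. -/
noncomputable def factorCount (P : K[X]) : ℕ := (factors P).card

theorem factorCount_mul {P Q : K[X]} (hP : P ≠ 0) (hQ : Q ≠ 0) :
    factorCount (P * Q) = factorCount P + factorCount Q := by
  have h := Multiset.card_eq_card_of_rel (factors_mul hP hQ)
  rwa [Multiset.card_add] at h

theorem factorCount_of_irreducible {P : K[X]} (hP : Irreducible P) : factorCount P = 1 :=
  card_factors_of_irreducible hP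

theorem factorCount_of_isUnit {P : K[X]} (hP : IsUnit P) : factorCount P = 0 := by
  rw [factorCount, factors_of_isUnit hP, Multiset.card_zero]

theorem factorCount_pos {P : K[X]} (h0 : P ≠ 0) (hP : ¬ IsUnit P) : 1 ≤ factorCount P := by
  obtain ⟨p, hp⟩ := exists_mem_factors h0 hP
  exact Multiset.card_pos_iff_exists_mem.2 ⟨p, hp⟩

theorem factorCount_le_scaleRoots {P : K[X]} (hP : P ≠ 0) (μ : K) :
    factorCount P ≤ factorCount (P.scaleRoots μ) := by
  induction P using WfDvdMonoid.induction_on_irreducible with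
  | zero => exact absurd rfl hP
  | unit u hu => rw [factorCount_of_isUnit hu]; exact Nat.zero_le _
  | mul a i ha hi ih =>
    rw [mul_scaleRoots_of_noZeroDivisors, factorCount_mul hi.ne_zero ha,
      factorCount_mul (scaleRoots_ne_zero hi.ne_zero μ) (scaleRoots_ne_zero ha μ),
      factorCount_of_irreducible hi]
    refine add_le_add (factorCount_pos (scaleRoots_ne_zero hi.ne_zero μ) fun hu => ?_) (ih ha)
    have h1 := natDegree_eq_zero_of_isUnit hu
    rw [natDegree_scaleRoots] at h1
    exact hi.natDegree_pos.ne' h1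

end Length

/-! ### Conjugate-reciprocal polynomials -/

section ConjReciprocal

variable {K : Type*} [Field K] (φ : K →+* K)

/-- The normalized conjugate-reciprocal of a polynomial, where `φ` acts on the coefficients. -/
noncomputable def conjReciprocal (P : K[X]) : K[X] :=
  C (φ (P.coeff 0))⁻¹ * P.reverse.map φ

theorem conjReciprocal_mul (P Q : K[X]) :
    conjReciprocal φ (P * Q) = conjReciprocal φ P * conjReciprocal φ Q := by
  simp only [conjReciprocal, mul_coeff_zero, map_mul, mul_inv, reverse_mul_of_domain,
    Polynomial.map_mul]
  ring

theorem conjReciprocal_one : conjReciprocal φ 1 = 1 := by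
  have h : (1 : K[X]).reverse = 1 := by rw [← C_1, reverse_C]
  simp [conjReciprocal, h]

theorem conjReciprocal_dvd {P Q : K[X]} (h : P ∣ Q) :
    conjReciprocal φ P ∣ conjReciprocal φ Q := by
  obtain ⟨R, rfl⟩ := h
  exact ⟨_, conjReciprocal_mul φ P R⟩

theorem coeff_conjReciprocal {P : K[X]} {i : ℕ} (hi : i ≤ P.natDegree) :
    (conjReciprocal φ P).coeff i = (φ (P.coeff 0))⁻¹ * φ (P.coeff (P.natDegree - i)) := by
  rw [conjReciprocal, coeff_C_mul, coeff_map, coeff_reverse, revAt_le hi]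

theorem natDegree_conjReciprocal {P : K[X]} (h0 : P.coeff 0 ≠ 0) :
    (conjReciprocal φ P).natDegree = P.natDegree := by
  rw [conjReciprocal, natDegree_C_mul (by simpa using h0), natDegree_map, reverse_natDegree,
    natTrailingDegree_eq_zero_of_constantCoeff_ne_zero (by simpa using h0), Nat.sub_zero]

theorem monic_conjReciprocal {P : K[X]} (h0 : P.coeff 0 ≠ 0) :
    (conjReciprocal φ P).Monic := by
  rw [Monic, leadingCoeff, natDegree_conjReciprocal φ h0, coeff_conjReciprocal φ le_rfl,
    Nat.sub_self, inv_mul_cancel₀ (by simpa using h0)]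

theorem conjReciprocal_coeff_zero_ne_zero {P : K[X]} (h0 : P.coeff 0 ≠ 0) :
    (conjReciprocal φ P).coeff 0 ≠ 0 := by
  have hP : P.leadingCoeff ≠ 0 := leadingCoeff_ne_zero.2 (by rintro rfl; simp at h0)
  rw [coeff_conjReciprocal φ (Nat.zero_le _), Nat.sub_zero]
  exact mul_ne_zero (inv_ne_zero (by simpa using h0)) (by simpa using hP)

variable {φ}

theorem conjReciprocal_conjReciprocal (hφ : ∀ x, φ (φ x) = x) {P : K[X]} (hP : P.Monic)
    (h0 : P.coeff 0 ≠ 0) : conjReciprocal φ (conjReciprocal φ P) = P := by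
  have hd := natDegree_conjReciprocal φ h0
  have hd' := natDegree_conjReciprocal φ (conjReciprocal_coeff_zero_ne_zero φ h0)
  ext i
  by_cases hi : i ≤ P.natDegree
  · rw [coeff_conjReciprocal φ (hd.symm ▸ hi), hd, coeff_conjReciprocal φ (Nat.zero_le _),
      coeff_conjReciprocal φ (Nat.sub_le _ _), Nat.sub_sub_self hi, Nat.sub_zero, coeff_natDegree,
      hP.leadingCoeff]
    simp only [map_mul, map_inv₀, hφ, map_one, mul_one, inv_inv]
    rw [mul_inv_cancel_left₀ h0]
  · rw [coeff_eq_zero_of_natDegree_lt (by omega), coeff_eq_zero_of_natDegree_lt (by omega)]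

theorem coeff_zero_ne_zero_of_dvd {P Q : K[X]} (h : P ∣ Q) (h0 : Q.coeff 0 ≠ 0) :
    P.coeff 0 ≠ 0 := by
  obtain ⟨R, rfl⟩ := h
  rw [mul_coeff_zero] at h0
  exact left_ne_zero_of_mul h0

theorem irreducible_conjReciprocal (hφ : ∀ x, φ (φ x) = x) {P : K[X]} (hP : P.Monic)
    (h0 : P.coeff 0 ≠ 0) (hi : Irreducible P) : Irreducible (conjReciprocal φ P) := by
  have h0' := conjReciprocal_coeff_zero_ne_zero φ h0
  have key : ∀ a : K[X], a ∣ conjReciprocal φ P → IsUnit (conjReciprocal φ a) → IsUnit a := by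
    intro a ha hu
    have ha0 := coeff_zero_ne_zero_of_dvd ha h0'
    have h1 := natDegree_eq_zero_of_isUnit hu
    rw [natDegree_conjReciprocal φ ha0] at h1
    refine isUnit_iff_degree_eq_zero.2 ?_
    rw [degree_eq_natDegree (by rintro rfl; simp at ha0), h1, Nat.cast_zero]
  refine ⟨fun hu => ?_, fun a b hab => ?_⟩
  · have h1 := natDegree_eq_zero_of_isUnit hu
    rw [natDegree_conjReciprocal φ h0] at h1
    exact hi.natDegree_pos.ne' h1
  · have h2 := conjReciprocal_conjReciprocal hφ hP h0
    rw [hab, conjReciprocal_mul] at h2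
    exact (hi.isUnit_or_isUnit h2.symm).imp (key a (hab ▸ dvd_mul_right a b))
      (key b (hab ▸ dvd_mul_left b a))

variable (φ)

/-- Monic polynomials with nonzero constant term fixed by `conjReciprocal φ`. -/
structure IsSelfConjReciprocal (P : K[X]) : Prop where
  monic : P.Monic
  coeff_zero : P.coeff 0 ≠ 0
  eq : conjReciprocal φ P = P

variable {φ}

theorem IsSelfConjReciprocal.one : IsSelfConjReciprocal φ (1 : K[X]) :=
  ⟨monic_one, by simp, conjReciprocal_one φ⟩

theorem IsSelfConjReciprocal.mul {P Q : K[X]} (hP : IsSelfConjReciprocal φ P)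
    (hQ : IsSelfConjReciprocal φ Q) : IsSelfConjReciprocal φ (P * Q) :=
  ⟨hP.monic.mul hQ.monic, by rw [mul_coeff_zero]; exact mul_ne_zero hP.coeff_zero hQ.coeff_zero,
    by rw [conjReciprocal_mul, hP.eq, hQ.eq]⟩

theorem IsSelfConjReciprocal.pow {P : K[X]} (hP : IsSelfConjReciprocal φ P) (m : ℕ) :
    IsSelfConjReciprocal φ (P ^ m) := by
  induction m with
  | zero => rw [pow_zero]; exact .one
  | succ m ih => rw [pow_succ]; exact ih.mul hP

theorem IsSelfConjReciprocal.prod {ι : Type*} (s : Finset ι) {f : ι → K[X]}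
    (hf : ∀ i ∈ s, IsSelfConjReciprocal φ (f i)) : IsSelfConjReciprocal φ (∏ i ∈ s, f i) :=
  Finset.prod_induction f _ (fun _ _ => .mul) .one hf

theorem IsSelfConjReciprocal.of_mul {P Q : K[X]} (hP : IsSelfConjReciprocal φ P)
    (hPQ : IsSelfConjReciprocal φ (P * Q)) : IsSelfConjReciprocal φ Q := by
  refine ⟨hP.monic.of_mul_monic_left hPQ.monic,
    coeff_zero_ne_zero_of_dvd (dvd_mul_left Q P) hPQ.coeff_zero, ?_⟩
  have h := hPQ.eq
  rw [conjReciprocal_mul, hP.eq] at h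
  exact mul_left_cancel₀ hP.monic.ne_zero h

variable (φ)

open scoped Classical in
/-- The smallest self-conjugate-reciprocal polynomial divisible by an irreducible `f`. -/
noncomputable def conjBlock (f : K[X]) : K[X] :=
  if conjReciprocal φ f = f then f else f * conjReciprocal φ f

/-- The polynomials `conjBlock φ f` for `f` monic irreducible with nonzero constant term. -/
def IsConjBlock (B : K[X]) : Prop :=
  ∃ f : K[X], f.Monic ∧ Irreducible f ∧ f.coeff 0 ≠ 0 ∧ conjBlock φ f = B

variable {φ}

theorem dvd_conjBlock (f : K[X]) : f ∣ conjBlock φ f := by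
  unfold conjBlock
  split_ifs
  · exact dvd_rfl
  · exact dvd_mul_right _ _

theorem isSelfConjReciprocal_conjBlock (hφ : ∀ x, φ (φ x) = x) {f : K[X]} (hf : f.Monic)
    (h0 : f.coeff 0 ≠ 0) : IsSelfConjReciprocal φ (conjBlock φ f) := by
  unfold conjBlock
  split_ifs with h
  · exact ⟨hf, h0, h⟩
  · refine ⟨hf.mul (monic_conjReciprocal φ h0), ?_, ?_⟩
    · rw [mul_coeff_zero]
      exact mul_ne_zero h0 (conjReciprocal_coeff_zero_ne_zero φ h0)
    · rw [conjReciprocal_mul, conjReciprocal_conjReciprocal hφ hf h0, mul_comm]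

theorem conjBlock_conjReciprocal (hφ : ∀ x, φ (φ x) = x) {f : K[X]} (hf : f.Monic)
    (h0 : f.coeff 0 ≠ 0) : conjBlock φ (conjReciprocal φ f) = conjBlock φ f := by
  have h2 := conjReciprocal_conjReciprocal hφ hf h0
  unfold conjBlock
  rw [h2]
  by_cases h : conjReciprocal φ f = f
  · rw [if_pos h, if_pos h.symm, h]
  · rw [if_neg h, if_neg (Ne.symm h), mul_comm]

theorem conjBlock_eq_of_dvd (hφ : ∀ x, φ (φ x) = x) {f g : K[X]} (hf : f.Monic)
    (hfi : Irreducible f) (hg : g.Monic) (hgi : Irreducible g) (h0 : g.coeff 0 ≠ 0)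
    (h : f ∣ conjBlock φ g) : conjBlock φ f = conjBlock φ g := by
  have hfg : f ∣ g → f = g := fun h =>
    eq_of_monic_of_associated hf hg (hfi.associated_of_dvd hgi h)
  by_cases hs : conjReciprocal φ g = g
  · rw [conjBlock, if_pos hs] at h
    rw [hfg h]
  · rw [conjBlock, if_neg hs] at h
    rcases hfi.prime.dvd_or_dvd h with h | h
    · rw [hfg h]
    · rw [eq_of_monic_of_associated hf (monic_conjReciprocal φ h0)
        (hfi.associated_of_dvd (irreducible_conjReciprocal hφ hg h0 hgi) h),
        conjBlock_conjReciprocal hφ hg h0]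

theorem factorCount_conjBlock_le (hφ : ∀ x, φ (φ x) = x) {f : K[X]} (hf : f.Monic)
    (hfi : Irreducible f) (h0 : f.coeff 0 ≠ 0) : factorCount (conjBlock φ f) ≤ 2 := by
  have hi := irreducible_conjReciprocal hφ hf h0 hfi
  unfold conjBlock
  split_ifs
  · rw [factorCount_of_irreducible hfi]; norm_num
  · rw [factorCount_mul hfi.ne_zero hi.ne_zero, factorCount_of_irreducible hfi,
      factorCount_of_irreducible hi]

theorem conjBlock_dvd (hφ : ∀ x, φ (φ x) = x) {f P : K[X]} (hf : f.Monic)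
    (hfi : Irreducible f) (hP : IsSelfConjReciprocal φ P) (h : f ∣ P) : conjBlock φ f ∣ P := by
  have h0 := coeff_zero_ne_zero_of_dvd h hP.coeff_zero
  unfold conjBlock
  split_ifs with hs
  · exact h
  · refine IsCoprime.mul_dvd ?_ h (hP.eq ▸ conjReciprocal_dvd φ h)
    refine (hfi.coprime_iff_not_dvd).2 fun hd => hs ?_
    exact (eq_of_monic_of_associated hf (monic_conjReciprocal φ h0)
      (hfi.associated_of_dvd (irreducible_conjReciprocal hφ hf h0 hfi) hd)).symm

theorem IsSelfConjReciprocal.exists_multiset_conjBlock (hφ : ∀ x, φ (φ x) = x) {P : K[X]}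
    (hP : IsSelfConjReciprocal φ P) :
    ∃ s : Multiset K[X], (∀ B ∈ s, IsConjBlock φ B) ∧ s.prod = P ∧
      factorCount P ≤ 2 * s.card := by
  induction hn : P.natDegree using Nat.strong_induction_on generalizing P with
  | _ n ih =>
  by_cases hu : IsUnit P
  · refine ⟨0, by simp, ?_, by rw [factorCount_of_isUnit hu]; exact Nat.zero_le _⟩
    rw [Multiset.prod_zero, hP.monic.isUnit_iff.1 hu]
  · obtain ⟨f, hf, hfi, hfP⟩ := exists_monic_irreducible_factor P hu
    have h0 := coeff_zero_ne_zero_of_dvd hfP hP.coeff_zero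
    have hB := isSelfConjReciprocal_conjBlock hφ hf h0
    obtain ⟨Q, rfl⟩ := conjBlock_dvd hφ hf hfi hP hfP
    have hQ := hB.of_mul hP
    have hdeg : 0 < (conjBlock φ f).natDegree :=
      hfi.natDegree_pos.trans_le (natDegree_le_of_dvd (dvd_conjBlock f) hB.monic.ne_zero)
    rw [hB.monic.natDegree_mul hQ.monic] at hn
    obtain ⟨s, hs, hsQ, hsc⟩ := ih Q.natDegree (by omega) hQ rfl
    refine ⟨conjBlock φ f ::ₘ s, ?_, by rw [Multiset.prod_cons, hsQ], ?_⟩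
    · intro B hBm
      rcases Multiset.mem_cons.1 hBm with rfl | h
      · exact ⟨f, hf, hfi, h0, rfl⟩
      · exact hs B h
    · rw [factorCount_mul hB.monic.ne_zero hQ.monic.ne_zero, Multiset.card_cons]
      have := factorCount_conjBlock_le hφ hf hfi h0
      omega

theorem IsConjBlock.isSelfConjReciprocal (hφ : ∀ x, φ (φ x) = x) {B : K[X]}
    (hB : IsConjBlock φ B) : IsSelfConjReciprocal φ B := by
  obtain ⟨f, hf, -, h0, rfl⟩ := hB
  exact isSelfConjReciprocal_conjBlock hφ hf h0

theorem IsConjBlock.natDegree_pos (hφ : ∀ x, φ (φ x) = x) {B : K[X]}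
    (hB : IsConjBlock φ B) : 0 < B.natDegree := by
  obtain ⟨f, hf, hfi, h0, rfl⟩ := hB
  exact hfi.natDegree_pos.trans_le (natDegree_le_of_dvd (dvd_conjBlock f)
    (isSelfConjReciprocal_conjBlock hφ hf h0).monic.ne_zero)

/-- Products of powers of distinct blocks determine the exponents. -/
theorem injective_prod_pow_conjBlock (hφ : ∀ x, φ (φ x) = x) {ι : Type*} [Fintype ι]
    (B : ι → K[X]) (hinj : Function.Injective B) (hB : ∀ i, IsConjBlock φ (B i)) :
    Function.Injective fun m : ι → ℕ => ∏ i, B i ^ m i := by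
  classical
  choose f hf hfi h0 hfB using hB
  have hne : ∀ i, B i ≠ 0 := fun i =>
    hfB i ▸ (isSelfConjReciprocal_conjBlock hφ (hf i) (h0 i)).monic.ne_zero
  have key : ∀ (m : ι → ℕ) i, emultiplicity (f i) (∏ j, B j ^ m j) =
      m i * emultiplicity (f i) (B i) := by
    intro m i
    rw [Finset.emultiplicity_prod (hfi i).prime, Finset.sum_eq_single i]
    · rw [emultiplicity_pow (hfi i).prime]
    · intro j _ hji
      refine emultiplicity_eq_zero.2 fun hd => hji ?_
      have h1 := (hfi i).prime.dvd_of_dvd_pow hd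
      rw [← hfB j] at h1
      have h2 := conjBlock_eq_of_dvd hφ (hf i) (hfi i) (hf j) (hfi j) (h0 j) h1
      rw [hfB, hfB] at h2
      exact (hinj h2).symm
    · exact fun h => absurd (Finset.mem_univ i) h
  intro m m' h
  funext i
  have h1 := key m i
  dsimp only at h
  rw [h, key m' i] at h1
  have hfin : FiniteMultiplicity (f i) (B i) :=
    FiniteMultiplicity.of_prime_left (hfi i).prime (hne i)
  rw [hfin.emultiplicity_eq_multiplicity] at h1
  have h2 : m' i * multiplicity (f i) (B i) = m i * multiplicity (f i) (B i) := by
    exact_mod_cast h1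
  have h3 : 0 < multiplicity (f i) (B i) :=
    multiplicity_pos_of_dvd (hfB i ▸ dvd_conjBlock (f i))
  exact (Nat.eq_of_mul_eq_mul_right h3 h2).symm

end ConjReciprocal

/-! ### Counting conjugate-reciprocal polynomials -/

section Counting

variable {K : Type*} [Field K] (φ : K →+* K)

/-- Monic polynomials of degree `n` whose coefficients satisfy `φ (a i) = ε * a (n - i)`. -/
def twistedReciprocal (ε : K) (n : ℕ) : Set K[X] :=
  {P | P.Monic ∧ P.natDegree = n ∧ ∀ i ≤ n, φ (P.coeff i) = ε * P.coeff (n - i)}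

variable {φ}

theorem coeff_zero_of_mem_twistedReciprocal {ε : K} {n : ℕ} {P : K[X]}
    (hP : P ∈ twistedReciprocal φ ε n) : ε * P.coeff 0 = 1 := by
  have h := hP.2.2 n le_rfl
  have h1 : P.coeff n = 1 := by rw [← hP.2.1]; exact hP.1
  rw [h1, map_one, Nat.sub_self] at h
  exact h.symm

theorem isSelfConjReciprocal_of_mem_twistedReciprocal {ε : K} {n : ℕ} {P : K[X]}
    (hP : P ∈ twistedReciprocal φ ε n) : IsSelfConjReciprocal φ P := by
  have h := coeff_zero_of_mem_twistedReciprocal hP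
  have h0 : P.coeff 0 ≠ 0 := right_ne_zero_of_mul_eq_one h
  refine ⟨hP.1, h0, ?_⟩
  have hd := natDegree_conjReciprocal φ h0
  ext i
  by_cases hi : i ≤ P.natDegree
  · have h2 := hP.2.2 (n - i) (Nat.sub_le _ _)
    have hi' : i ≤ n := hP.2.1 ▸ hi
    rw [Nat.sub_sub_self hi'] at h2
    have h3 : φ (P.coeff 0) = ε := by
      rw [hP.2.2 0 (Nat.zero_le _), Nat.sub_zero]
      have h1 : P.coeff n = 1 := by rw [← hP.2.1]; exact hP.1
      rw [h1, mul_one]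
    rw [coeff_conjReciprocal φ hi, hP.2.1, h2, h3,
      inv_mul_cancel_left₀ (left_ne_zero_of_mul_eq_one h)]
  · rw [coeff_eq_zero_of_natDegree_lt (by omega), coeff_eq_zero_of_natDegree_lt (by omega)]

theorem IsSelfConjReciprocal.coeff_eq {P : K[X]} (hP : IsSelfConjReciprocal φ P) {i : ℕ}
    (hi : i ≤ P.natDegree) : φ (P.coeff i) = φ (P.coeff 0) * P.coeff (P.natDegree - i) := by
  have h := coeff_conjReciprocal φ (P := P) (i := P.natDegree - i) (Nat.sub_le _ _)
  rw [hP.eq, Nat.sub_sub_self hi] at h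
  rw [h, mul_inv_cancel_left₀ (by simpa using hP.coeff_zero)]

theorem IsSelfConjReciprocal.norm_coeff_zero {P : K[X]} (hP : IsSelfConjReciprocal φ P) :
    φ (P.coeff 0) * P.coeff 0 = 1 := by
  have h := hP.coeff_eq le_rfl
  rw [Nat.sub_self, coeff_natDegree, hP.monic.leadingCoeff, map_one] at h
  exact h.symm

theorem IsSelfConjReciprocal.mem_twistedReciprocal {P : K[X]} (hP : IsSelfConjReciprocal φ P) :
    P ∈ twistedReciprocal φ (φ (P.coeff 0)) P.natDegree :=
  ⟨hP.monic, rfl, fun _ hi => hP.coeff_eq hi⟩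

theorem exists_twistedReciprocal (hφ : ∀ x, φ (φ x) = x) {ε : K} (hε : φ ε * ε = 1) {n : ℕ}
    (hn : 0 < n) (c : ℕ → K) (hc : ∀ i, 0 < i → i < n → φ (c i) = ε * c (n - i)) :
    ∃ P ∈ twistedReciprocal φ ε n, ∀ i, 0 < i → i < n → P.coeff i = c i := by
  set a : ℕ → K := fun i => if i = 0 then φ ε else if i = n then 1 else c i with ha
  set P : K[X] := ∑ i ∈ Finset.range (n + 1), C (a i) * X ^ i with hPdef
  have hcoeff : ∀ i, P.coeff i = if i ≤ n then a i else 0 := by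
    intro i
    simp [hPdef, coeff_X_pow]
  have ha0 : a 0 = φ ε := by simp [ha]
  have han : a n = 1 := by simp [ha, hn.ne']
  have hai : ∀ i, 0 < i → i < n → a i = c i := fun i h1 h2 => by simp [ha, h1.ne', h2.ne]
  have hle : P.natDegree ≤ n := natDegree_le_iff_coeff_eq_zero.2 fun i hi => by
    rw [hcoeff, if_neg (by omega)]
  have hPn : P.coeff n = 1 := by rw [hcoeff, if_pos le_rfl, han]
  have hdeg : P.natDegree = n := le_antisymm hle (le_natDegree_of_ne_zero (by rw [hPn]; simp))
  refine ⟨P, ⟨by rw [Monic, leadingCoeff, hdeg, hPn], hdeg, fun i hi => ?_⟩, fun i h1 h2 => ?_⟩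
  · rw [hcoeff, hcoeff, if_pos hi, if_pos (Nat.sub_le _ _)]
    rcases Nat.eq_zero_or_pos i with rfl | h1
    · rw [ha0, Nat.sub_zero, han, hφ, mul_one]
    · rcases hi.eq_or_lt with rfl | h2
      · rw [han, Nat.sub_self, ha0, map_one, mul_comm, hε]
      · rw [hai i h1 h2, hai (n - i) (by omega) (by omega), hc i h1 h2]
  · rw [hcoeff, if_pos h2.le, hai i h1 h2]

theorem twistedReciprocal_ext {ε : K} {n : ℕ} {P Q : K[X]}
    (hP : P ∈ twistedReciprocal φ ε n) (hQ : Q ∈ twistedReciprocal φ ε n)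
    (h : ∀ i, 0 < i → i < n → P.coeff i = Q.coeff i) : P = Q := by
  have h0P := coeff_zero_of_mem_twistedReciprocal hP
  have h0Q := coeff_zero_of_mem_twistedReciprocal hQ
  ext i
  rcases Nat.eq_zero_or_pos i with rfl | h1
  · exact mul_left_cancel₀ (left_ne_zero_of_mul_eq_one h0P) (h0P.trans h0Q.symm)
  · rcases lt_trichotomy i n with h2 | h2 | h2
    · exact h i h1 h2
    · have hPn : P.coeff i = 1 := by rw [h2, ← hP.2.1]; exact hP.1
      have hQn : Q.coeff i = 1 := by rw [h2, ← hQ.2.1]; exact hQ.1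
      rw [hPn, hQn]
    · rw [coeff_eq_zero_of_natDegree_lt (by rw [hP.2.1]; exact h2),
        coeff_eq_zero_of_natDegree_lt (by rw [hQ.2.1]; exact h2)]

theorem ncard_twistedReciprocal_sq (hφ : ∀ x, φ (φ x) = x) {ω : K} (hω : φ ω ≠ ω)
    {ε : K} (hε : φ ε * ε = 1) {n : ℕ} (hn : 0 < n) :
    (twistedReciprocal φ ε n).ncard ^ 2 = Nat.card K ^ (n - 1) := by
  have hε0 : ε ≠ 0 := right_ne_zero_of_mul_eq_one hε
  have hsub : ω - φ ω ≠ 0 := sub_ne_zero.2 hω.symm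
  let g : twistedReciprocal φ ε n × twistedReciprocal φ ε n → (Fin (n - 1) → K) :=
    fun p j => p.1.1.coeff (j + 1) + ω * p.2.1.coeff (j + 1)
  have hg : Function.Bijective g := by
    constructor
    · rintro ⟨⟨P, hP⟩, ⟨Q, hQ⟩⟩ ⟨⟨P', hP'⟩, ⟨Q', hQ'⟩⟩ h
      have h1 : ∀ i, 0 < i → i < n →
          P.coeff i + ω * Q.coeff i = P'.coeff i + ω * Q'.coeff i := by
        intro i hi hin
        have := congrFun h ⟨i - 1, by omega⟩
        simpa only [g, Nat.sub_add_cancel hi] using this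
      have h2 : ∀ i, 0 < i → i < n →
          P.coeff i + φ ω * Q.coeff i = P'.coeff i + φ ω * Q'.coeff i := by
        intro i hi hin
        have := congrArg φ (h1 (n - i) (by omega) (by omega))
        simp only [map_add, map_mul] at this
        rw [hP.2.2 _ (Nat.sub_le _ _), hQ.2.2 _ (Nat.sub_le _ _), hP'.2.2 _ (Nat.sub_le _ _),
          hQ'.2.2 _ (Nat.sub_le _ _), Nat.sub_sub_self hin.le] at this
        apply mul_left_cancel₀ hε0
        linear_combination this
      have h3 : ∀ i, 0 < i → i < n → Q.coeff i = Q'.coeff i := by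
        intro i hi hin
        apply mul_left_cancel₀ hsub
        linear_combination h1 i hi hin - h2 i hi hin
      have h4 : ∀ i, 0 < i → i < n → P.coeff i = P'.coeff i := by
        intro i hi hin
        linear_combination h1 i hi hin - ω * h3 i hi hin
      have h5 := twistedReciprocal_ext hP hP' h4
      have h6 := twistedReciprocal_ext hQ hQ' h3
      subst h5 h6
      rfl
    · intro h
      let H : ℕ → K := fun i => if hi : 0 < i ∧ i < n then h ⟨i - 1, by omega⟩ else 0
      let y : ℕ → K := fun i => (H i - φ ε * φ (H (n - i))) / (ω - φ ω)
      have hsub' : φ ω - ω ≠ 0 := sub_ne_zero.2 hω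
      have hy : ∀ i, 0 < i → i < n → φ (y i) = ε * y (n - i) := by
        intro i hi hin
        simp only [y, Nat.sub_sub_self hin.le, map_div₀, map_sub, map_mul, hφ]
        field_simp
        linear_combination (φ ω - ω) * φ (H i) * hε
      have hx : ∀ i, 0 < i → i < n → φ (H i - ω * y i) = ε * (H (n - i) - ω * y (n - i)) := by
        intro i hi hin
        have e1 : (ω - φ ω) * y (n - i) = H (n - i) - φ ε * φ (H i) := by
          simp only [y, Nat.sub_sub_self hin.le]
          field_simp
        rw [map_sub, map_mul, hy i hi hin]
        linear_combination ε * e1 - φ (H i) * hε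
      obtain ⟨Q, hQ, hQc⟩ := exists_twistedReciprocal hφ hε hn y hy
      obtain ⟨P, hP, hPc⟩ := exists_twistedReciprocal hφ hε hn (fun i => H i - ω * y i) hx
      refine ⟨(⟨P, hP⟩, ⟨Q, hQ⟩), ?_⟩
      funext j
      have hj : (j : ℕ) + 1 < n := by omega
      have hHj : H (j + 1) = h j := by simp [H, hj]
      simp only [g]
      rw [hPc _ (Nat.succ_pos _) hj, hQc _ (Nat.succ_pos _) hj, sub_add_cancel, hHj]
  have hcard := Nat.card_congr (Equiv.ofBijective g hg)
  rw [Nat.card_prod, Nat.card_fun, Nat.card_coe_set_eq, Nat.card_fin] at hcard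
  rw [sq, hcard]

theorem scaleRoots_mem_twistedReciprocal {ε μ : K} (hμ : φ μ * μ = 1) {n : ℕ} {P : K[X]}
    (hP : P ∈ twistedReciprocal φ ε n) :
    P.scaleRoots μ ∈ twistedReciprocal φ (ε * φ μ ^ n) n := by
  refine ⟨(monic_scaleRoots_iff μ).2 hP.1, by rw [natDegree_scaleRoots, hP.2.1], fun i hi => ?_⟩
  rw [coeff_scaleRoots, coeff_scaleRoots, hP.2.1, map_mul, map_pow, hP.2.2 i hi,
    Nat.sub_sub_self hi]
  have h : φ μ ^ n * μ ^ i = φ μ ^ (n - i) := by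
    conv_lhs => rw [← Nat.sub_add_cancel hi, pow_add, mul_assoc, ← mul_pow, hμ, one_pow, mul_one]
  rw [← h]
  ring

theorem finite_natDegree_le [Finite K] (n : ℕ) : {P : K[X] | P.natDegree ≤ n}.Finite := by
  have h : Finite (degreeLT K (n + 1)) := Module.finite_of_finite K
  refine (Set.toFinite (degreeLT K (n + 1) : Set K[X])).subset fun P hP => ?_
  simp only [SetLike.mem_coe, mem_degreeLT]
  exact (degree_le_natDegree).trans_lt (by exact_mod_cast Nat.lt_succ_of_le hP)

open Classical in
theorem card_norm_eq_one [Fintype K] {q : ℕ} (hK : Fintype.card K = q ^ 2) (hq : 0 < q)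
    (hφq : ∀ x, φ x = x ^ q) : (Finset.univ.filter fun x : K => φ x * x = 1).card = q + 1 := by
  have h1 := IsCyclic.card_powMonoidHom_ker Kˣ (q + 1)
  have h2 : Nat.card Kˣ = (q - 1) * (q + 1) := by
    rw [Nat.card_eq_fintype_card, Fintype.card_units, hK]
    obtain ⟨r, rfl⟩ : ∃ r, q = r + 1 := ⟨q - 1, by omega⟩
    rw [Nat.add_sub_cancel]
    have : (r + 1) ^ 2 = r * (r + 1 + 1) + 1 := by ring
    omega
  rw [h2, Nat.gcd_eq_right (dvd_mul_left _ _)] at h1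
  rw [← h1, Nat.card_eq_fintype_card, ← Finset.card_univ]
  symm
  refine Finset.card_bij (fun x _ => ((x : Kˣ) : K)) ?_ ?_ ?_
  · intro x _
    have h := x.2
    rw [MonoidHom.mem_ker, powMonoidHom_apply] at h
    have h' := congrArg (Units.val) h
    rw [Units.val_pow_eq_pow_val, Units.val_one] at h'
    rw [Finset.mem_filter, hφq, ← pow_succ]
    exact ⟨Finset.mem_univ _, h'⟩
  · intro x _ y _ h
    exact Subtype.ext (Units.ext h)
  · intro x hx
    rw [Finset.mem_filter, hφq, ← pow_succ] at hx
    have hx0 : x ≠ 0 := by rintro rfl; simp at hx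
    refine ⟨⟨Units.mk0 x hx0, ?_⟩, Finset.mem_univ _, rfl⟩
    rw [MonoidHom.mem_ker, powMonoidHom_apply]
    ext
    simpa using hx.2

theorem ncard_twistedReciprocal [Fintype K] {q : ℕ} (hK : Fintype.card K = q ^ 2) (hq : 1 < q)
    (hφq : ∀ x, φ x = x ^ q) (hφ : ∀ x, φ (φ x) = x) {ε : K} (hε : φ ε * ε = 1) {n : ℕ}
    (hn : 0 < n) : (twistedReciprocal φ ε n).ncard = q ^ (n - 1) := by
  classical
  obtain ⟨ω, hω⟩ : ∃ ω, φ ω ≠ ω := by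
    by_contra! h
    have hne : (X ^ q - X : K[X]) ≠ 0 := FiniteField.X_pow_card_sub_X_ne_zero K hq
    have h1 : Fintype.card K ≤ (X ^ q - X : K[X]).natDegree :=
      (Finset.card_le_card_of_injOn id (t := (X ^ q - X : K[X]).roots.toFinset) (fun x _ => by
        simp [hne, ← hφq, h]) (Set.injOn_id _)).trans
        ((Multiset.toFinset_card_le _).trans (card_roots' _))
    rw [FiniteField.X_pow_card_sub_X_natDegree_eq K hq, hK] at h1
    nlinarith
  have h := ncard_twistedReciprocal_sq hφ hω hε hn
  rw [Nat.card_eq_fintype_card, hK, ← pow_mul, mul_comm, pow_mul] at h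
  exact Nat.pow_left_injective two_ne_zero h

theorem ncard_isSelfConjReciprocal_le [Fintype K] {q : ℕ} (hK : Fintype.card K = q ^ 2)
    (hq : 1 < q) (hφq : ∀ x, φ x = x ^ q) (hφ : ∀ x, φ (φ x) = x) {n : ℕ} (hn : 0 < n) :
    {P : K[X] | IsSelfConjReciprocal φ P ∧ P.natDegree = n}.ncard ≤ (q + 1) * q ^ (n - 1) := by
  classical
  set E := Finset.univ.filter fun x : K => φ x * x = 1 with hE
  have hfin : ∀ ε, (twistedReciprocal φ ε n).Finite := fun ε =>
    (finite_natDegree_le n).subset fun P hP => hP.2.1.le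
  have hsub : {P : K[X] | IsSelfConjReciprocal φ P ∧ P.natDegree = n} ⊆
      ⋃ ε ∈ E, twistedReciprocal φ ε n := by
    rintro P ⟨hP, rfl⟩
    refine Set.mem_biUnion (x := φ (P.coeff 0)) ?_ hP.mem_twistedReciprocal
    simp only [hE, Finset.coe_filter, Finset.mem_univ, true_and, Set.mem_ofPred_eq, hφ]
    rw [mul_comm]
    exact hP.norm_coeff_zero
  calc _ ≤ (⋃ ε ∈ E, twistedReciprocal φ ε n).ncard :=
        Set.ncard_le_ncard hsub (E.finite_toSet.biUnion fun ε _ => hfin ε)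
    _ ≤ ∑ ε ∈ E, (twistedReciprocal φ ε n).ncard := Finset.set_ncard_biUnion_le _ _
    _ = ∑ ε ∈ E, q ^ (n - 1) := Finset.sum_congr rfl fun ε hε =>
        ncard_twistedReciprocal hK hq hφq hφ (Finset.mem_filter.1 hε).2 hn
    _ = (q + 1) * q ^ (n - 1) := by
        rw [Finset.sum_const, card_norm_eq_one hK (by omega) hφq, smul_eq_mul]

/-- Rotating the roots by norm-one elements shows that polynomials with many factors are not
concentrated on a single twist. -/
theorem mul_ncard_twistedReciprocal_le [Fintype K] {q : ℕ} (hK : Fintype.card K = q ^ 2)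
    (hq : 0 < q) (hφq : ∀ x, φ x = x ^ q) {ε : K} {n : ℕ} (hn : 0 < n) (x : ℝ) :
    (q + 1) * {P | P ∈ twistedReciprocal φ ε n ∧ x < (factorCount P : ℝ)}.ncard ≤
      n * {P : K[X] | IsSelfConjReciprocal φ P ∧ P.natDegree = n ∧
        x < (factorCount P : ℝ)}.ncard := by
  classical
  set E := Finset.univ.filter fun x : K => φ x * x = 1 with hE
  have hfinA : {P | P ∈ twistedReciprocal φ ε n ∧ x < (factorCount P : ℝ)}.Finite :=
    (finite_natDegree_le n).subset fun P hP => hP.1.2.1.le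
  have hfinB : {P : K[X] | IsSelfConjReciprocal φ P ∧ P.natDegree = n ∧
      x < (factorCount P : ℝ)}.Finite :=
    (finite_natDegree_le n).subset fun P hP => hP.2.1.le
  rw [Set.ncard_eq_toFinset_card _ hfinA, Set.ncard_eq_toFinset_card _ hfinB,
    ← card_norm_eq_one hK hq hφq, ← Finset.card_product]
  have hμ0 : ∀ μ ∈ E, μ ≠ 0 := fun μ hμ =>
    right_ne_zero_of_mul_eq_one (Finset.mem_filter.1 hμ).2
  refine Finset.card_le_mul_card_image_of_maps_to
    (f := fun p : K × K[X] => p.2.scaleRoots p.1) ?_ n ?_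
  · rintro ⟨μ, P⟩ hp
    rw [Finset.mem_product, Set.Finite.mem_toFinset] at hp
    rw [Set.Finite.mem_toFinset]
    have hμ := (Finset.mem_filter.1 hp.1).2
    have hmem := scaleRoots_mem_twistedReciprocal hμ hp.2.1
    refine ⟨isSelfConjReciprocal_of_mem_twistedReciprocal hmem, hmem.2.1, ?_⟩
    exact hp.2.2.trans_le (by exact_mod_cast factorCount_le_scaleRoots hp.2.1.1.ne_zero μ)
  · intro Q _
    refine (Finset.card_le_card_of_injOn (t := (nthRoots n (ε * Q.coeff 0)).toFinset)
      Prod.fst ?_ ?_).trans ((Multiset.toFinset_card_le _).trans (card_nthRoots _ _))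
    · rintro ⟨μ, P⟩ hp
      rw [Finset.mem_coe, Finset.mem_filter, Finset.mem_product, Set.Finite.mem_toFinset] at hp
      obtain ⟨⟨-, hP, -⟩, hPQ⟩ := hp
      have h := coeff_zero_of_mem_twistedReciprocal hP
      rw [Finset.mem_coe, Multiset.mem_toFinset, mem_nthRoots hn, ← hPQ, coeff_scaleRoots,
        hP.2.1, Nat.sub_zero, ← mul_assoc, h, one_mul]
    · rintro ⟨μ, P⟩ hp ⟨μ', P'⟩ hp' (rfl : μ = μ')
      rw [Finset.mem_coe, Finset.mem_filter, Finset.mem_product] at hp hp'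
      have h0 := hμ0 μ hp.1.1
      have h : P.scaleRoots μ = P'.scaleRoots μ := hp.2.trans hp'.2.symm
      have h' := congrArg (fun R : K[X] => R.scaleRoots μ⁻¹) h
      simp only [← scaleRoots_mul, mul_inv_cancel₀ h0, scaleRoots_one] at h'
      rw [h']

end Counting

/-! ### Euler products -/

section EulerProduct

/-- If the truncated expansions of `∏ (1 - xᵢ)⁻¹` are bounded, then so is the corresponding
truncation for the weights `3 / 2 * xᵢ`, with the square of the bound. -/
theorem sum_piFinset_prod_pow_le {ι : Type*} [Fintype ι] [DecidableEq ι] (x : ι → ℝ)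
    (h0 : ∀ i, 0 ≤ x i) (h1 : ∀ i, x i ≤ 1 / 2) (c : ℝ)
    (hc : ∀ L : ℕ, ∑ m ∈ Fintype.piFinset fun _ : ι => Finset.range L, ∏ i, x i ^ m i ≤ c)
    (L : ℕ) :
    ∑ m ∈ Fintype.piFinset fun _ : ι => Finset.range L, ∏ i, (3 / 2 * x i) ^ m i ≤ c ^ 2 := by
  have hlim : ∏ i, (1 - x i)⁻¹ ≤ c := by
    have ht : Filter.Tendsto (fun L : ℕ => ∏ i, ∑ j ∈ Finset.range L, x i ^ j) Filter.atTop
        (nhds (∏ i, (1 - x i)⁻¹)) :=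
      tendsto_finsetProd _ fun i _ =>
        (hasSum_geometric_of_lt_one (h0 i) (by linarith [h1 i])).tendsto_sum_nat
    refine le_of_tendsto' ht fun L => ?_
    rw [Finset.prod_univ_sum]
    exact hc L
  have hpos : 0 ≤ ∏ i, (1 - x i)⁻¹ :=
    Finset.prod_nonneg fun i _ => inv_nonneg.2 (by linarith [h1 i])
  rw [← Finset.prod_univ_sum]
  calc ∏ i, ∑ j ∈ Finset.range L, (3 / 2 * x i) ^ j ≤ ∏ i, (1 - x i)⁻¹ ^ 2 := by
        refine Finset.prod_le_prod
          (fun i _ => Finset.sum_nonneg fun j _ => pow_nonneg (by linarith [h0 i]) _)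
          fun i _ => ?_
        have hi0 := h0 i
        have hi1 := h1 i
        have h2 := hasSum_geometric_of_lt_one (r := 3 / 2 * x i) (by linarith) (by linarith)
        refine (sum_le_hasSum _ (fun j _ => pow_nonneg (by linarith) _) h2).trans ?_
        rw [inv_pow]
        refine inv_anti₀ (by nlinarith) ?_
        nlinarith
    _ = (∏ i, (1 - x i)⁻¹) ^ 2 := Finset.prod_pow _ _ _
    _ ≤ c ^ 2 := pow_le_pow_left₀ hpos hlim 2

variable {K : Type*} [Field K] {φ : K →+* K}

theorem sum_isSelfConjReciprocal_le [Fintype K] {q : ℕ} (hK : Fintype.card K = q ^ 2)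
    (hq : 1 < q) (hφq : ∀ x, φ x = x ^ q) (hφ : ∀ x, φ (φ x) = x) {r : ℝ} (hr0 : 0 ≤ r)
    (hr1 : r < 1) (G : Finset K[X]) (hG : ∀ P ∈ G, IsSelfConjReciprocal φ P) :
    ∑ P ∈ G, (r / q) ^ P.natDegree ≤ 1 + 3 / 2 * (r / (1 - r)) := by
  classical
  have hq0 : (0 : ℝ) < q := by exact_mod_cast (by omega : 0 < q)
  obtain ⟨L, hL⟩ : ∃ L, ∀ P ∈ G, P.natDegree ∈ Finset.range (L + 1) :=
    ⟨G.sup natDegree, fun P hP => Finset.mem_range.2 (Nat.lt_succ_of_le (Finset.le_sup hP))⟩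
  rw [← Finset.sum_fiberwise_of_maps_to hL]
  have hterm : ∀ d, ∑ P ∈ G with P.natDegree = d, (r / q) ^ P.natDegree =
      (G.filter fun P => P.natDegree = d).card * (r / q) ^ d := fun d => by
    rw [Finset.sum_congr rfl fun P hP => by rw [(Finset.mem_filter.1 hP).2], Finset.sum_const,
      nsmul_eq_mul]
  simp only [hterm]
  rw [Finset.sum_range_succ', add_comm]
  refine add_le_add ?_ ?_
  · rw [pow_zero, mul_one]
    have : (G.filter fun P => P.natDegree = 0).card ≤ 1 := by
      refine Finset.card_le_one.2 fun P hP Q hQ => ?_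
      rw [Finset.mem_filter] at hP hQ
      rw [(hG P hP.1).monic.natDegree_eq_zero.1 hP.2, (hG Q hQ.1).monic.natDegree_eq_zero.1 hQ.2]
    exact_mod_cast this
  · have hle : ∀ d ∈ Finset.range L, ((G.filter fun P => P.natDegree = d + 1).card : ℝ) *
        (r / q) ^ (d + 1) ≤ 3 / 2 * (r * r ^ d) := by
      intro d _
      have hcard : (G.filter fun P => P.natDegree = d + 1).card ≤ (q + 1) * q ^ d := by
        rw [← Set.ncard_coe_finset]
        refine (Set.ncard_le_ncard (fun P hP => ?_) ((finite_natDegree_le (d + 1)).subset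
          fun P hP => hP.2.le)).trans
          (ncard_isSelfConjReciprocal_le hK hq hφq hφ (Nat.succ_pos d))
        rw [Finset.mem_coe, Finset.mem_filter] at hP
        exact ⟨hG P hP.1, hP.2⟩
      have hcard' : ((G.filter fun P => P.natDegree = d + 1).card : ℝ) ≤ (q + 1) * q ^ d := by
        exact_mod_cast hcard
      have hq2 : (2 : ℝ) ≤ q := by exact_mod_cast hq
      calc _ ≤ ((q : ℝ) + 1) * q ^ d * (r / q) ^ (d + 1) :=
            mul_le_mul_of_nonneg_right hcard' (by positivity)
        _ = (q + 1) / q * (r * r ^ d) := by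
            rw [div_pow, pow_succ, pow_succ]
            field_simp
        _ ≤ 3 / 2 * (r * r ^ d) := by
            refine mul_le_mul_of_nonneg_right ?_ (by positivity)
            rw [div_le_div_iff₀ hq0 (by norm_num)]
            linarith
    refine (Finset.sum_le_sum hle).trans ?_
    rw [← Finset.mul_sum, ← Finset.mul_sum, div_eq_mul_inv]
    refine mul_le_mul_of_nonneg_left (mul_le_mul_of_nonneg_left ?_ hr0) (by norm_num)
    exact sum_le_hasSum _ (fun j _ => pow_nonneg hr0 _) (hasSum_geometric_of_lt_one hr0 hr1)

theorem ncard_isSelfConjReciprocal_factorCount_le [Fintype K] {q : ℕ}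
    (hK : Fintype.card K = q ^ 2) (hq : 1 < q) (hφq : ∀ x, φ x = x ^ q)
    (hφ : ∀ x, φ (φ x) = x) {r : ℝ} (hr0 : 0 ≤ r) (hr1 : r < 1) (n : ℕ) (x : ℝ) :
    ({P : K[X] | IsSelfConjReciprocal φ P ∧ P.natDegree = n ∧
      x < (factorCount P : ℝ)}.ncard : ℝ) * ((3 / 2 : ℝ) ^ (x / 2) * (r / q) ^ n) ≤
      (1 + 3 / 2 * (r / (1 - r))) ^ 2 := by
  classical
  have hq2 : (2 : ℝ) ≤ q := by exact_mod_cast hq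
  have hu0 : 0 ≤ r / q := by positivity
  have hu1 : r / q ≤ 1 / 2 := by
    rw [div_le_div_iff₀ (by linarith) (by norm_num)]
    linarith
  let ι := {B : K[X] // IsConjBlock φ B ∧ B.natDegree ≤ n}
  have hιfin : Finite ι :=
    ((finite_natDegree_le n).subset fun B hB => hB.2 :
      {B : K[X] | IsConjBlock φ B ∧ B.natDegree ≤ n}.Finite)
  have : Fintype ι := Fintype.ofFinite ι
  have hB : ∀ i : ι, IsConjBlock φ i.1 := fun i => i.2.1
  have hinj := injective_prod_pow_conjBlock hφ (fun i : ι => i.1) Subtype.val_injective hB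
  have hself : ∀ i : ι, IsSelfConjReciprocal φ i.1 := fun i => (hB i).isSelfConjReciprocal hφ
  have hdeg : ∀ m : ι → ℕ, (∏ i, i.1 ^ m i).natDegree = ∑ i, m i * i.1.natDegree := fun m => by
    rw [natDegree_prod_of_monic _ _ fun i _ => (hself i).monic.pow _]
    exact Finset.sum_congr rfl fun i _ => (hself i).monic.natDegree_pow _
  have hprod : ∀ m : ι → ℕ, ∏ i, ((r / q) ^ i.1.natDegree) ^ m i =
      (r / q) ^ (∏ i, i.1 ^ m i).natDegree := fun m => by
    rw [hdeg, ← Finset.prod_pow_eq_pow_sum]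
    exact Finset.prod_congr rfl fun i _ => by rw [← pow_mul, mul_comm]
  have hmain := sum_piFinset_prod_pow_le (fun i : ι => (r / q) ^ i.1.natDegree)
    (fun i => pow_nonneg hu0 _)
    (fun i => (pow_le_of_le_one hu0 (by linarith) ((hB i).natDegree_pos hφ).ne').trans hu1)
    (1 + 3 / 2 * (r / (1 - r))) (fun L => by
      simp only [hprod]
      rw [← Finset.sum_image (f := fun P : K[X] => (r / q) ^ P.natDegree)
        (g := fun m : ι → ℕ => ∏ i, i.1 ^ m i) hinj.injOn]
      refine sum_isSelfConjReciprocal_le hK hq hφq hφ hr0 hr1 _ fun P hP => ?_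
      obtain ⟨m, -, rfl⟩ := Finset.mem_image.1 hP
      exact .prod _ fun i _ => (hself i).pow _) (n + 1)
  refine le_trans ?_ hmain
  have hfin : {P : K[X] | IsSelfConjReciprocal φ P ∧ P.natDegree = n ∧
      x < (factorCount P : ℝ)}.Finite :=
    (finite_natDegree_le n).subset fun P hP => hP.2.1.le
  have hex : ∀ P : K[X], IsSelfConjReciprocal φ P ∧ P.natDegree = n ∧ x < (factorCount P : ℝ) →
      ∃ m : ι → ℕ, ∏ i, i.1 ^ m i = P ∧ x < 2 * ((∑ i, m i : ℕ) : ℝ) := by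
    rintro P ⟨hP, hPn, hPx⟩
    obtain ⟨s, hs, hsP, hsc⟩ := hP.exists_multiset_conjBlock hφ
    have hmem : ∀ B ∈ s, IsConjBlock φ B ∧ B.natDegree ≤ n := fun B hBs =>
      ⟨hs B hBs, hPn ▸ natDegree_le_of_dvd (hsP ▸ Multiset.dvd_prod hBs) hP.monic.ne_zero⟩
    lift s to Multiset ι using hmem
    refine ⟨fun i => s.count i, ?_, ?_⟩
    · rw [← hsP, Finset.prod_multiset_map_count]
      symm
      exact Finset.prod_subset (Finset.subset_univ _) fun i _ hi => by
        rw [Multiset.count_eq_zero_of_notMem (by simpa using hi), pow_zero]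
    · rw [Multiset.sum_count_eq_card (fun i _ => Finset.mem_univ i)]
      rw [Multiset.card_map] at hsc
      exact hPx.trans_le (by exact_mod_cast hsc)
  choose! M hMP hMx using hex
  rw [Set.ncard_eq_toFinset_card _ hfin, ← nsmul_eq_mul, ← Finset.sum_const]
  have hMinj : Set.InjOn M (hfin.toFinset : Set K[X]) := by
    intro P hP Q hQ h
    rw [Finset.mem_coe, Set.Finite.mem_toFinset] at hP hQ
    rw [← hMP P hP, ← hMP Q hQ, h]
  calc _ ≤ ∑ P ∈ hfin.toFinset, ∏ i, (3 / 2 * (r / q) ^ i.1.natDegree) ^ M P i := by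
        refine Finset.sum_le_sum fun P hP => ?_
        rw [Set.Finite.mem_toFinset] at hP
        simp only [mul_pow (3 / 2 : ℝ)]
        rw [Finset.prod_mul_distrib, hprod, hMP P hP, hP.2.1, Finset.prod_pow_eq_pow_sum]
        refine mul_le_mul_of_nonneg_right ?_ (pow_nonneg hu0 _)
        rw [← Real.rpow_natCast]
        exact Real.rpow_le_rpow_of_exponent_le (by norm_num) (by linarith [hMx P hP])
    _ = ∑ m ∈ hfin.toFinset.image M, ∏ i, (3 / 2 * (r / q) ^ i.1.natDegree) ^ m i := by
        rw [Finset.sum_image hMinj]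
    _ ≤ _ := by
        refine Finset.sum_le_sum_of_subset_of_nonneg (fun m hm => ?_) fun m _ _ =>
          Finset.prod_nonneg fun i _ => pow_nonneg (mul_nonneg (by norm_num) (pow_nonneg hu0 _)) _
        obtain ⟨P, hP, rfl⟩ := Finset.mem_image.1 hm
        rw [Set.Finite.mem_toFinset] at hP
        refine Fintype.mem_piFinset.2 fun i => Finset.mem_range.2 (Nat.lt_succ_of_le ?_)
        have h1 : M P i * i.1.natDegree ≤ n := by
          have hsum := hdeg (M P)
          rw [hMP P hP, hP.2.1] at hsum
          refine le_of_le_of_eq ?_ hsum.symm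
          exact Finset.single_le_sum (f := fun i : ι => M P i * i.1.natDegree)
            (fun _ _ => Nat.zero_le _) (Finset.mem_univ i)
        exact (Nat.le_mul_of_pos_right _ ((hB i).natDegree_pos hφ)).trans h1

end EulerProduct

theorem exists_ringHom_eq_pow {q : ℕ} (hq : IsPrimePow q) {K : Type*} [Field K] [Fintype K]
    (hK : Fintype.card K = q ^ 2) :
    ∃ φ : K →+* K, (∀ x, φ x = x ^ q) ∧ ∀ x, φ (φ x) = x := by
  obtain ⟨p, m, hp, -, rfl⟩ := hq
  have : Fact p.Prime := ⟨hp.nat_prime⟩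
  rw [← pow_mul] at hK
  have : CharP K p := charP_of_card_eq_prime_pow hK
  refine ⟨iterateFrobenius K p m, fun x => iterateFrobenius_def _ _ _, fun x => ?_⟩
  rw [iterateFrobenius_def, iterateFrobenius_def, ← pow_mul, ← pow_add, ← mul_two, ← hK,
    FiniteField.pow_card]

/-- For every `k > 0` there exists `N` such that for every `n ≥ 2` and every prime power
`q`, among the monic polynomials `P ∈ F_{q²}[x]` of degree `n` with
`P̄(x) = (-x)^n P(1/x)` (i.e. `(coeff P i)^q = (-1)^n * coeff P (n-i)` for `0 ≤ i ≤ n`),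
the number of those having more than `N log n` monic irreducible factors (with
multiplicity) over `F_{q²}[x]` is at most `n^{-k}` times the total number. -/
theorem few_factors_SU (k : ℝ) (hk : 0 < k) :
    ∃ N : ℝ, ∀ n : ℕ, 2 ≤ n → ∀ q : ℕ, IsPrimePow q →
      ∀ (K : Type) [Field K] [Fintype K], Fintype.card K = q ^ 2 →
      (Set.ncard {P : Polynomial K | P.Monic ∧ P.natDegree = n ∧
          (∀ i ≤ n, (P.coeff i) ^ q = (-1) ^ n * P.coeff (n - i)) ∧
          N * Real.log n <
            ((UniqueFactorizationMonoid.factors P).card : ℝ)} : ℝ) ≤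
        (n : ℝ) ^ (-k) *
          (Set.ncard {P : Polynomial K | P.Monic ∧ P.natDegree = n ∧
            ∀ i ≤ n, (P.coeff i) ^ q = (-1) ^ n * P.coeff (n - i)} : ℝ) := by
  have hlog : 0 < Real.log (3 / 2) := Real.log_pos (by norm_num)
  refine ⟨2 * (k + 8) / Real.log (3 / 2), fun n hn q hq K _ _ hK => ?_⟩
  obtain ⟨φ, hφq, hφ⟩ := exists_ringHom_eq_pow hq hK
  have hq1 : 1 < q := hq.one_lt
  have hn0 : 0 < n := by omega
  have hε : φ ((-1) ^ n) * (-1) ^ n = 1 := by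
    rw [map_pow, map_neg, map_one, ← mul_pow]
    norm_num
  set x : ℝ := 2 * (k + 8) / Real.log (3 / 2) * Real.log n with hx
  have hset : {P : K[X] | P.Monic ∧ P.natDegree = n ∧
      ∀ i ≤ n, (P.coeff i) ^ q = (-1) ^ n * P.coeff (n - i)} =
      twistedReciprocal φ ((-1) ^ n) n := by
    simp only [twistedReciprocal, hφq]
  have hset' : {P : K[X] | P.Monic ∧ P.natDegree = n ∧
      (∀ i ≤ n, (P.coeff i) ^ q = (-1) ^ n * P.coeff (n - i)) ∧ x < ((factors P).card : ℝ)} =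
      {P | P ∈ twistedReciprocal φ ((-1) ^ n) n ∧ x < (factorCount P : ℝ)} := by
    ext P
    rw [← hset]
    simp only [Set.mem_ofPred_eq, factorCount, and_assoc]
  rw [hset, hset', ncard_twistedReciprocal hK hq1 hφq hφ hε hn0]
  have h1 := mul_ncard_twistedReciprocal_le (ε := (-1) ^ n) hK (by omega) hφq hn0 x
  set A : ℕ := {P | P ∈ twistedReciprocal φ ((-1) ^ n) n ∧ x < (factorCount P : ℝ)}.ncard
  have hnR : (2 : ℝ) ≤ n := by exact_mod_cast hn
  have hqR : (1 : ℝ) < q := by exact_mod_cast hq1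
  have h2n : 1 / (2 * (n : ℝ)) ≤ 1 / 4 := one_div_le_one_div_of_le (by norm_num) (by linarith)
  have h2n0 : 0 < 1 / (2 * (n : ℝ)) := by positivity
  have h2 := ncard_isSelfConjReciprocal_factorCount_le hK hq1 hφq hφ
    (r := 1 - 1 / (2 * n)) (by linarith) (by linarith) n x
  set S : ℕ := {P : K[X] | IsSelfConjReciprocal φ P ∧ P.natDegree = n ∧
      x < (factorCount P : ℝ)}.ncard
  have hr : 1 + 3 / 2 * ((1 - 1 / (2 * (n : ℝ))) / (1 - (1 - 1 / (2 * n)))) ≤ 3 * n := by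
    have : (1 - 1 / (2 * (n : ℝ))) / (1 - (1 - 1 / (2 * n))) = 2 * n - 1 := by
      field_simp
      ring
    rw [this]
    linarith
  have hbern : (1 / 2 : ℝ) ≤ (1 - 1 / (2 * (n : ℝ))) ^ n := by
    have := one_add_mul_le_pow (a := -(1 / (2 * (n : ℝ)))) (by linarith) n
    rw [← sub_eq_add_neg] at this
    refine le_trans (le_of_eq ?_) this
    field_simp
    ring
  have hpow : (3 / 2 : ℝ) ^ (x / 2) = (n : ℝ) ^ (k + 8) := by
    rw [Real.rpow_def_of_pos (by norm_num), Real.rpow_def_of_pos (by linarith), hx]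
    congr 1
    field_simp
  have hr2 : (1 + 3 / 2 * ((1 - 1 / (2 * (n : ℝ))) / (1 - (1 - 1 / (2 * n))))) ^ 2 ≤
      (3 * n) ^ 2 := by
    refine pow_le_pow_left₀ ?_ hr 2
    have : 0 ≤ (1 - 1 / (2 * (n : ℝ))) / (1 - (1 - 1 / (2 * n))) :=
      div_nonneg (by linarith) (by linarith)
    linarith
  have h3 := h2.trans hr2
  rw [hpow, Real.rpow_add (by linarith), div_pow] at h3
  have h8 : (n : ℝ) ^ (8 : ℝ) = n ^ 8 := by exact_mod_cast Real.rpow_natCast (n : ℝ) 8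
  rw [h8] at h3
  set T : ℝ := (n : ℝ) ^ k with hT
  have hT0 : 0 < T := Real.rpow_pos_of_pos (by linarith) _
  have hS : (S : ℝ) * T * n ^ 6 ≤ 18 * q ^ n := by
    have hqn : (0 : ℝ) < q ^ n := by positivity
    have h4 : (S : ℝ) * (T * n ^ 8 * (1 / 2 / q ^ n)) ≤ (3 * n) ^ 2 := by
      refine le_trans ?_ h3
      gcongr
    have h5 : (S : ℝ) * (T * n ^ 8 * (1 / 2 / q ^ n)) =
        (S * T * n ^ 6) / (2 * q ^ n) * n ^ 2 := by
      field_simp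
    have h6 : (S * T * n ^ 6) / (2 * q ^ n) ≤ 9 := by
      refine le_of_mul_le_mul_right (a := (n : ℝ) ^ 2) ?_ (by positivity)
      linarith
    rw [div_le_iff₀ (by positivity)] at h6
    linarith
  have h1R : ((q : ℝ) + 1) * A ≤ n * S := by exact_mod_cast h1
  rw [Real.rpow_neg (by linarith), ← hT, inv_mul_eq_div, le_div_iff₀ hT0]
  push_cast
  have hqn : (q : ℝ) ^ n = q * q ^ (n - 1) := by
    rw [← pow_succ', Nat.sub_add_cancel hn0]
  have h32 : (32 : ℝ) ≤ n ^ 5 := by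
    calc (32 : ℝ) = 2 ^ 5 := by norm_num
      _ ≤ n ^ 5 := pow_le_pow_left₀ (by norm_num) hnR 5
  refine le_of_mul_le_mul_left (a := (q : ℝ) * 18) ?_ (by positivity)
  calc (q : ℝ) * 18 * (A * T) ≤ ((q + 1) * A) * T * n ^ 5 := by
        have hAT : 0 ≤ (A : ℝ) * T := by positivity
        calc (q : ℝ) * 18 * (A * T) ≤ ((q + 1) * (A * T)) * n ^ 5 := by
              have : (q : ℝ) * 18 ≤ (q + 1) * n ^ 5 := by nlinarith
              nlinarith
          _ = _ := by ring
    _ ≤ (n * S) * T * n ^ 5 := by gcongr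
    _ = S * T * n ^ 6 := by ring
    _ ≤ 18 * q ^ n := hS
    _ = q * 18 * q ^ (n - 1) := by rw [hqn]; ring
end

section
/- For a prime power q, let O_{2n}(q) denote the set of monic polynomials P(x) ∈ F_q[x] of degree 2n such that P(x) = x^{2n} P(1/x), i.e., the coefficient of x^i equals the coefficient of x^{2n−i} for every 0 ≤ i ≤ 2n. For every k > 0 there exists N such that for every integer n ≥ 2 and every prime power q, the number of P ∈ O_{2n}(q) that split into more than N·log n monic irreducible factors in F_q[x] (counted with multiplicity) is at most n^{−k} · |O_{2n}(q)|. -/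
namespace ReciprocalLift

open Polynomial UniqueFactorizationMonoid

variable {F : Type*} [Field F]

/-- The polynomial `x ^ n * Q (x + 1 / x)`, for `Q` of degree at most `n`. -/
noncomputable def reciprocalLift (n : ℕ) (Q : F[X]) : F[X] :=
  ∑ i ∈ Finset.range (n + 1), C (Q.coeff i) * (X ^ (n - i) * (X ^ 2 + 1) ^ i)

theorem aeval_reciprocalLift {K : Type*} [Field K] [Algebra F K] {n : ℕ} {Q : F[X]}
    (hQ : Q.natDegree ≤ n) {a : K} (ha : a ≠ 0) :
    aeval a (reciprocalLift n Q) = a ^ n * aeval (a + a⁻¹) Q := by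
  rw [reciprocalLift, map_sum, aeval_eq_sum_range' (Nat.lt_succ_of_le hQ), Finset.mul_sum]
  refine Finset.sum_congr rfl fun i hi => ?_
  have hi : i ≤ n := Nat.lt_succ_iff.1 (Finset.mem_range.1 hi)
  obtain ⟨m, rfl⟩ := Nat.exists_eq_add_of_le hi
  have : a ^ 2 + 1 = a * (a + a⁻¹) := by field_simp
  simp only [map_mul, aeval_C, map_pow, map_add, aeval_X, map_one, Algebra.smul_def, this,
    mul_pow, Nat.add_sub_cancel_left, pow_add]
  ring

theorem natDegree_reciprocalLift_le (n : ℕ) (Q : F[X]) :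
    (reciprocalLift n Q).natDegree ≤ 2 * n := by
  refine natDegree_sum_le_of_forall_le _ _ fun i hi => ?_
  have hi : i ≤ n := Nat.lt_succ_iff.1 (Finset.mem_range.1 hi)
  have : (C (Q.coeff i) * (X ^ (n - i) * (X ^ 2 + 1) ^ i)).natDegree ≤ 0 + ((n - i) + i * 2) := by
    compute_degree
    omega
  omega

theorem reflect_pow_sq_add_one (i : ℕ) :
    reflect (2 * i) (((X : F[X]) ^ 2 + 1) ^ i) = (X ^ 2 + 1) ^ i := by
  induction i with
  | zero => simp
  | succ i ih =>
    rw [pow_succ, mul_add, mul_one, reflect_mul _ _ (by compute_degree; omega) (by compute_degree),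
      ih, reflect_add, reflect_monomial, reflect_one, revAt_le le_rfl]
    ring

theorem reflect_reciprocalLift (n : ℕ) (Q : F[X]) :
    reflect (2 * n) (reciprocalLift n Q) = reciprocalLift n Q := by
  have hsum (s : Finset ℕ) (f : ℕ → F[X]) :
      reflect (2 * n) (∑ i ∈ s, f i) = ∑ i ∈ s, reflect (2 * n) (f i) := by
    ext; simp [coeff_reflect]
  rw [reciprocalLift, hsum]
  refine Finset.sum_congr rfl fun i hi => ?_
  have hi : i ≤ n := Nat.lt_succ_iff.1 (Finset.mem_range.1 hi)
  rw [reflect_C_mul, show 2 * n = 2 * (n - i) + 2 * i by omega,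
    reflect_mul _ _ (by compute_degree; omega) (by compute_degree; omega), reflect_pow_sq_add_one,
    reflect_monomial, revAt_le (by omega)]
  congr 3
  omega

theorem reflect_eq_self_iff {n : ℕ} {P : F[X]} :
    reflect n P = P ↔ ∀ i ≤ n, P.coeff i = P.coeff (n - i) := by
  constructor
  · intro h i hi
    conv_lhs => rw [← h]
    rw [coeff_reflect, revAt_le hi]
  · intro h
    ext i
    rw [coeff_reflect]
    rcases le_or_gt i n with hi | hi
    · rw [revAt_le hi, h i hi]
    · rw [revAt_eq_self_of_lt hi]

theorem coeff_zero_reciprocalLift (n : ℕ) (Q : F[X]) :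
    (reciprocalLift n Q).coeff 0 = Q.coeff n := by
  rw [coeff_zero_eq_eval_zero, reciprocalLift, eval_finsetSum, Finset.sum_eq_single n]
  · simp
  · intro i hi hin
    have : n - i ≠ 0 := by have := Finset.mem_range.1 hi; omega
    simp [this]
  · simp

theorem coeff_reciprocalLift (n : ℕ) (Q : F[X]) :
    (reciprocalLift n Q).coeff (2 * n) = Q.coeff n := by
  rw [reflect_eq_self_iff.1 (reflect_reciprocalLift n Q) _ le_rfl, Nat.sub_self,
    coeff_zero_reciprocalLift]

theorem reciprocalLift_ne_zero {Q : F[X]} (hQ : Q ≠ 0) :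
    reciprocalLift Q.natDegree Q ≠ 0 := by
  intro h
  have := coeff_zero_reciprocalLift Q.natDegree Q
  rw [h, coeff_zero] at this
  exact hQ (leadingCoeff_eq_zero.1 this.symm)

theorem natDegree_reciprocalLift {Q : F[X]} (hQ : Q ≠ 0) :
    (reciprocalLift Q.natDegree Q).natDegree = 2 * Q.natDegree :=
  natDegree_eq_of_le_of_coeff_ne_zero (natDegree_reciprocalLift_le _ _)
    (by rw [coeff_reciprocalLift]; exact leadingCoeff_ne_zero.2 hQ)

theorem algebraMap_reciprocalLift {n : ℕ} {Q : F[X]} (hQ : Q.natDegree ≤ n) :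
    algebraMap F[X] (RatFunc F) (reciprocalLift n Q) =
      RatFunc.X ^ n * aeval ((RatFunc.X : RatFunc F) + RatFunc.X⁻¹) Q := by
  rw [← aeval_reciprocalLift hQ RatFunc.X_ne_zero, ← RatFunc.algebraMap_X, aeval_algebraMap_apply,
    aeval_X_left_apply]

theorem reciprocalLift_mul {m n : ℕ} {Q R : F[X]} (hQ : Q.natDegree ≤ m) (hR : R.natDegree ≤ n) :
    reciprocalLift (m + n) (Q * R) = reciprocalLift m Q * reciprocalLift n R := by
  apply RatFunc.algebraMap_injective F
  rw [map_mul, algebraMap_reciprocalLift hQ, algebraMap_reciprocalLift hR,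
    algebraMap_reciprocalLift (natDegree_mul_le.trans (add_le_add hQ hR)), map_mul]
  ring

theorem reciprocalLift_injOn (n : ℕ) :
    Set.InjOn (reciprocalLift (F := F) n) {Q | Q.natDegree ≤ n} := by
  intro Q hQ R hR h
  by_contra hne
  have hD := reciprocalLift_ne_zero (sub_ne_zero.2 hne)
  apply hD
  apply RatFunc.algebraMap_injective F
  have h' := congrArg (algebraMap F[X] (RatFunc F)) h
  rw [algebraMap_reciprocalLift hQ, algebraMap_reciprocalLift hR] at h'
  rw [algebraMap_reciprocalLift le_rfl, map_sub,
    mul_left_cancel₀ (pow_ne_zero n RatFunc.X_ne_zero) h', sub_self, mul_zero, map_zero]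

theorem exists_reciprocalLift_eq (n : ℕ) {P : F[X]} (hP : P.natDegree ≤ 2 * n)
    (hsymm : reflect (2 * n) P = P) : ∃ Q : F[X], Q.natDegree ≤ n ∧ reciprocalLift n Q = P := by
  induction n generalizing P with
  | zero =>
    refine ⟨P, by simpa using hP, ?_⟩
    rw [eq_C_of_natDegree_le_zero (p := P) (by simpa using hP)]
    simp [reciprocalLift]
  | succ n ih =>
    set c := P.coeff 0 with hc
    set S := P - C c * (X ^ 2 + 1) ^ (n + 1) with hS
    have hSsymm : reflect (2 * (n + 1)) S = S := by
      rw [hS, sub_eq_add_neg, ← neg_mul, ← C_neg, reflect_add, hsymm, reflect_C_mul,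
        reflect_pow_sq_add_one]
    have hSdeg : S.natDegree ≤ 2 * (n + 1) := by
      refine (natDegree_sub_le _ _).trans (max_le hP ?_)
      compute_degree
      omega
    have hS0 : S.coeff 0 = 0 := by
      simp [hS, hc, coeff_zero_eq_eval_zero]
    have hSX : S = X * S.divX := by
      conv_lhs => rw [← divX_mul_X_add S, hS0, C_0, add_zero, mul_comm]
    rw [reflect_eq_self_iff] at hSsymm
    have hcoeff (i : ℕ) (hi : 2 * n < i) : S.divX.coeff i = 0 := by
      rw [coeff_divX]
      rcases eq_or_ne i (2 * n + 1) with rfl | hne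
      · rw [show 2 * n + 1 + 1 = 2 * (n + 1) by ring, hSsymm _ le_rfl, Nat.sub_self, hS0]
      · exact coeff_eq_zero_of_natDegree_lt (by omega)
    obtain ⟨Q, hQdeg, hQ⟩ := ih (P := S.divX) (natDegree_le_iff_coeff_eq_zero.2 hcoeff) (by
      rw [reflect_eq_self_iff]
      intro i hi
      rw [coeff_divX, coeff_divX, hSsymm _ (by omega)]
      congr 1
      omega)
    refine ⟨C c * X ^ (n + 1) + Q, ?_, ?_⟩
    · refine (natDegree_add_le _ _).trans (max_le (natDegree_C_mul_X_pow_le _ _) (by omega))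
    · have hdeg : (C c * X ^ (n + 1) : F[X]).natDegree ≤ n + 1 := natDegree_C_mul_X_pow_le _ _
      have hP' : P = C c * (X ^ 2 + 1) ^ (n + 1) + X * S.divX := by rw [← hSX, hS]; ring
      apply RatFunc.algebraMap_injective F
      rw [algebraMap_reciprocalLift ((natDegree_add_le _ _).trans (max_le hdeg (by omega)))]
      conv_rhs => rw [hP', ← hQ]
      rw [map_add (algebraMap F[X] _), map_mul _ X, algebraMap_reciprocalLift hQdeg]
      have hX := RatFunc.X_ne_zero (K := F)
      have : (RatFunc.X : RatFunc F) ^ 2 + 1 = RatFunc.X * (RatFunc.X + RatFunc.X⁻¹) := by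
        field_simp
      simp only [map_add, map_mul, map_pow, RatFunc.algebraMap_X, RatFunc.algebraMap_C, map_one,
        aeval_X, aeval_C, this, mul_pow, RatFunc.algebraMap_eq_C]
      ring

theorem card_factors_mul {P Q : F[X]} (hP : P ≠ 0) (hQ : Q ≠ 0) :
    (factors (P * Q)).card = (factors P).card + (factors Q).card := by
  rw [Multiset.card_eq_card_of_rel (factors_mul hP hQ), Multiset.card_add]

theorem mul_card_factors_le_natDegree {P : F[X]} (hP : P ≠ 0) {d : ℕ}
    (hd : ∀ S, Irreducible S → S ∣ P → d ≤ S.natDegree) :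
    d * (factors P).card ≤ P.natDegree := by
  have h := natDegree_eq_of_degree_eq (degree_eq_degree_of_associated (factors_prod hP))
  have h0 : (0 : F[X]) ∉ factors P := fun h0 => (irreducible_of_factor _ h0).ne_zero rfl
  rw [← h, natDegree_multiset_prod _ h0, mul_comm, ← smul_eq_mul,
    ← Multiset.card_map natDegree]
  refine Multiset.card_nsmul_le_sum fun x hx => ?_
  obtain ⟨S, hS, rfl⟩ := Multiset.mem_map.1 hx
  exact hd S (irreducible_of_factor _ hS) (dvd_of_mem_factors hS)

theorem natDegree_le_of_dvd_reciprocalLift {R S : F[X]} (hR : Irreducible R) (hS : Irreducible S)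
    (h : S ∣ reciprocalLift R.natDegree R) : R.natDegree ≤ S.natDegree := by
  have : Fact (Irreducible S) := ⟨hS⟩
  set a := AdjoinRoot.root S with ha
  have hroot : aeval a (reciprocalLift R.natDegree R) = 0 := by
    rw [AdjoinRoot.aeval_eq]
    exact AdjoinRoot.mk_eq_zero.2 h
  have ha0 : a ≠ 0 := by
    intro h0
    rw [h0, ← coeff_zero_eq_aeval_zero', coeff_zero_reciprocalLift] at hroot
    exact leadingCoeff_ne_zero.2 hR.ne_zero ((map_eq_zero _).1 hroot)
  rw [aeval_reciprocalLift le_rfl ha0] at hroot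
  have hroot := (mul_eq_zero.1 hroot).resolve_left (pow_ne_zero _ ha0)
  have hfin : Module.Finite F (AdjoinRoot S) := (AdjoinRoot.powerBasis hS.ne_zero).finite
  have hdeg := minpoly.natDegree_le (A := F) (x := a + a⁻¹)
  rw [(AdjoinRoot.powerBasis hS.ne_zero).finrank, AdjoinRoot.powerBasis_dim,
    ← minpoly.eq_of_irreducible hR hroot, natDegree_mul_C
      (inv_ne_zero (leadingCoeff_ne_zero.2 hR.ne_zero))] at hdeg
  exact hdeg

theorem card_factors_reciprocalLift_le {Q : F[X]} (hQ : Q ≠ 0) :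
    (factors (reciprocalLift Q.natDegree Q)).card ≤ 2 * (factors Q).card := by
  induction Q using induction_on_prime with
  | h₁ => exact absurd rfl hQ
  | h₂ Q hu =>
    have h0 := natDegree_reciprocalLift hQ
    rw [natDegree_eq_zero_of_isUnit hu, mul_zero] at h0
    rw [natDegree_eq_zero_of_isUnit hu, factors_of_isUnit]
    · simp
    · rw [isUnit_iff_degree_eq_zero, degree_eq_natDegree, h0, Nat.cast_zero]
      simpa [natDegree_eq_zero_of_isUnit hu] using reciprocalLift_ne_zero hQ
  | h₃ Q R hQ0 hR ih =>
    have hR0 := hR.ne_zero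
    rw [natDegree_mul hR0 hQ0, reciprocalLift_mul le_rfl le_rfl,
      card_factors_mul (reciprocalLift_ne_zero hR0) (reciprocalLift_ne_zero hQ0),
      card_factors_mul hR0 hQ0, card_factors_of_irreducible hR.irreducible]
    have hle := mul_card_factors_le_natDegree (reciprocalLift_ne_zero hR0)
      fun S hS hdvd => natDegree_le_of_dvd_reciprocalLift hR.irreducible hS hdvd
    rw [natDegree_reciprocalLift hR0, mul_comm 2] at hle
    have := Nat.le_of_mul_le_mul_left hle hR.irreducible.natDegree_pos
    have := ih hQ0
    omega

theorem exists_squarefree_mul_sq {Q : F[X]} (hQ : Q ≠ 0) :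
    ∃ A B : F[X], Squarefree A ∧ B.Monic ∧ A * B ^ 2 = Q := by
  induction hd : Q.natDegree using Nat.strong_induction_on generalizing Q with
  | _ d ih =>
    by_cases hsq : Squarefree Q
    · exact ⟨Q, 1, hsq, monic_one, by simp⟩
    obtain ⟨x, hx, hu⟩ : ∃ x, x * x ∣ Q ∧ ¬ IsUnit x := by
      simpa [Squarefree] using hsq
    obtain ⟨R, rfl⟩ := hx
    have hx0 : x ≠ 0 := by rintro rfl; simp at hQ
    have hR0 : R ≠ 0 := by rintro rfl; simp at hQ
    have hxdeg : 0 < x.natDegree := natDegree_pos_iff_degree_pos.2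
      (degree_pos_of_ne_zero_of_nonunit hx0 hu)
    rw [natDegree_mul (mul_ne_zero hx0 hx0) hR0, natDegree_mul hx0 hx0] at hd
    obtain ⟨A, B, hA, hB, rfl⟩ := ih R.natDegree (by omega) hR0 rfl
    have hlc : x.leadingCoeff ≠ 0 := leadingCoeff_ne_zero.2 hx0
    refine ⟨C (x.leadingCoeff ^ 2) * A, B * (x * C x.leadingCoeff⁻¹), ?_,
      hB.mul (monic_mul_leadingCoeff_inv hx0), ?_⟩
    · have : IsUnit (C (x.leadingCoeff ^ 2)) := isUnit_C.2 (pow_ne_zero 2 hlc).isUnit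
      exact (associated_unit_mul_left A _ this).squarefree_iff.2 hA
    · have : C x.leadingCoeff * C x.leadingCoeff⁻¹ = 1 := by
        rw [← C_mul, mul_inv_cancel₀ hlc, C_1]
      rw [C_pow]
      linear_combination (A * B ^ 2 * x ^ 2) * (C x.leadingCoeff * C x.leadingCoeff⁻¹ + 1) * this

theorem card_factors_le_natDegree {P : F[X]} (hP : P ≠ 0) :
    (factors P).card ≤ P.natDegree := by
  simpa using mul_card_factors_le_natDegree hP (d := 1) fun S hS _ => hS.natDegree_pos

variable [Fintype F]

theorem card_monic_natDegree (n : ℕ) :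
    Nat.card {P : F[X] // P.Monic ∧ P.natDegree = n} = Fintype.card F ^ n := by
  rw [Nat.card_congr ((monicEquivDegreeLT n).trans (degreeLTEquiv F n).toEquiv)]
  simp

variable (F) in
theorem finite_monic_natDegree (n : ℕ) : {P : F[X] | P.Monic ∧ P.natDegree = n}.Finite :=
  Finite.of_equiv _ ((monicEquivDegreeLT n).trans (degreeLTEquiv F n).toEquiv).symm

variable (F) in
/-- The finite set of monic polynomials of degree `n`. -/
noncomputable def monics (n : ℕ) : Finset F[X] := (finite_monic_natDegree F n).toFinset

@[simp]
theorem mem_monics {n : ℕ} {P : F[X]} : P ∈ monics F n ↔ P.Monic ∧ P.natDegree = n := by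
  simp [monics]

theorem card_monics (n : ℕ) : (monics F n).card = Fintype.card F ^ n := by
  rw [monics, ← Set.ncard_eq_toFinset_card _ (finite_monic_natDegree F n),
    ← card_monic_natDegree]
  rfl

open Classical in
theorem card_filter_dvd_monics_le {D : F[X]} (hD : D.Monic) (n : ℕ) :
    ((monics F n).filter (D ∣ ·)).card ≤ Fintype.card F ^ (n - D.natDegree) := by
  rw [← card_monics]
  refine (Finset.card_le_card ?_).trans (Finset.card_image_le (f := (D * ·)))
  intro Q hQ
  obtain ⟨hQ, E, rfl⟩ := Finset.mem_filter.1 hQ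
  obtain ⟨hm, hdeg⟩ := mem_monics.1 hQ
  have hE := hD.of_mul_monic_left hm
  rw [hD.natDegree_mul hE] at hdeg
  exact Finset.mem_image.2 ⟨E, mem_monics.2 ⟨hE, by omega⟩, rfl⟩

open Classical in
theorem two_pow_card_factors_le {n : ℕ} {A Q : F[X]} (hA : Squarefree A) (hAQ : A ∣ Q)
    (hQ : Q ∈ monics F n) :
    2 ^ (factors A).card ≤
      (((Finset.range (n + 1)).biUnion (monics F)).filter (· ∣ Q)).card := by
  obtain ⟨hQm, rfl⟩ := mem_monics.1 hQ
  have hA0 : A ≠ 0 := hA.ne_zero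
  have hnodup := (squarefree_iff_nodup_normalizedFactors hA0).1 hA
  have hmem (s : Finset F[X]) (hs : s ⊆ (normalizedFactors A).toFinset) (p : F[X]) (hp : p ∈ s) :
      Prime p ∧ p.Monic := by
    have := (Polynomial.mem_normalizedFactors_iff hA0).1 (Multiset.mem_toFinset.1 (hs hp))
    exact ⟨this.1.prime, this.2.1⟩
  have hcard : (factors A).card = (normalizedFactors A).toFinset.card := by
    rw [Multiset.toFinset_card_of_nodup hnodup, normalizedFactors, Multiset.card_map]
  rw [hcard, ← Finset.card_powerset]
  refine Finset.card_le_card_of_injOn (fun s => ∏ p ∈ s, p) ?_ ?_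
  · intro s hs
    have hs := Finset.mem_powerset.1 hs
    have hdvd : ∏ p ∈ s, p ∣ Q := by
      refine dvd_trans ?_ hAQ
      refine dvd_trans (Finset.prod_dvd_prod_of_subset _ _ _ hs) ?_
      rw [Finset.prod, Multiset.toFinset_val, hnodup.dedup, Multiset.map_id']
      exact (prod_normalizedFactors hA0).dvd
    simp only [Finset.coe_filter, Set.mem_ofPred_eq, Finset.mem_biUnion, Finset.mem_range,
      mem_monics]
    exact ⟨⟨_, Nat.lt_succ_of_le (natDegree_le_of_dvd hdvd hQm.ne_zero),
      monic_prod_of_monic _ _ fun p hp => (hmem s hs p hp).2, rfl⟩, hdvd⟩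
  · intro s hs t ht hst
    have hs := Finset.mem_powerset.1 hs
    have ht := Finset.mem_powerset.1 ht
    have key {u v : Finset F[X]} (hu : u ⊆ (normalizedFactors A).toFinset)
        (hv : v ⊆ (normalizedFactors A).toFinset) (h : ∏ p ∈ u, p ∣ ∏ p ∈ v, p) : u ⊆ v := by
      intro p hp
      obtain ⟨r, hr, hpr⟩ := (hmem u hu p hp).1.exists_mem_finset_dvd
        ((Finset.dvd_prod_of_mem (fun p => p) hp).trans h)
      have : p = r := eq_of_monic_of_associated (hmem u hu p hp).2 (hmem v hv r hr).2
        ((hmem u hu p hp).1.associated_of_dvd (hmem v hv r hr).1 hpr)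
      rwa [this]
    exact (key hs ht (dvd_of_eq hst)).antisymm (key ht hs (dvd_of_eq hst.symm))

open Classical in
theorem sum_card_monic_divisors_le (n : ℕ) :
    ∑ Q ∈ monics F n, (((Finset.range (n + 1)).biUnion (monics F)).filter (· ∣ Q)).card ≤
      (n + 1) * Fintype.card F ^ n := by
  simp_rw [Finset.card_filter]
  rw [Finset.sum_comm]
  simp_rw [← Finset.card_filter]
  rw [Finset.sum_biUnion]
  swap
  · refine fun a _ b _ hab => Finset.disjoint_left.2 fun P ha hb => hab ?_
    rw [← (mem_monics.1 ha).2, (mem_monics.1 hb).2]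
  calc _ ≤ ∑ d ∈ Finset.range (n + 1), Fintype.card F ^ n := by
        refine Finset.sum_le_sum fun d hd => ?_
        calc _ ≤ ∑ D ∈ monics F d, Fintype.card F ^ (n - d) := by
              refine Finset.sum_le_sum fun D hD => ?_
              obtain ⟨hDm, rfl⟩ := mem_monics.1 hD
              exact card_filter_dvd_monics_le hDm n
          _ = _ := by
              have := Finset.mem_range.1 hd
              rw [Finset.sum_const, card_monics, smul_eq_mul, ← pow_add]
              congr 1
              omega
    _ = _ := by simp

open Classical in
theorem two_pow_mul_card_sq_dvd_le (n t : ℕ) :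
    2 ^ t * ((monics F n).filter fun Q => ∃ B : F[X], B.Monic ∧ t ≤ B.natDegree ∧
      B ^ 2 ∣ Q).card ≤ (n + 1) * Fintype.card F ^ n := by
  set s := (Finset.range (n + 1)).filter fun b => t ≤ b ∧ 2 * b ≤ n with hs
  have hsub : ((monics F n).filter fun Q => ∃ B : F[X], B.Monic ∧ t ≤ B.natDegree ∧
      B ^ 2 ∣ Q) ⊆ s.biUnion fun b => (monics F b).biUnion fun B =>
        (monics F n).filter (B ^ 2 ∣ ·) := by
    intro Q hQ
    obtain ⟨hQ, B, hB, ht, hdvd⟩ := Finset.mem_filter.1 hQ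
    have hdeg := natDegree_le_of_dvd hdvd (mem_monics.1 hQ).1.ne_zero
    rw [natDegree_pow, (mem_monics.1 hQ).2] at hdeg
    refine Finset.mem_biUnion.2 ⟨B.natDegree, ?_, Finset.mem_biUnion.2 ⟨B, mem_monics.2 ⟨hB, rfl⟩,
      Finset.mem_filter.2 ⟨hQ, hdvd⟩⟩⟩
    simp only [hs, Finset.mem_filter, Finset.mem_range]
    omega
  calc _ ≤ 2 ^ t * ∑ b ∈ s, Fintype.card F ^ (n - b) := by
        refine Nat.mul_le_mul_left _ ((Finset.card_le_card hsub).trans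
          (Finset.card_biUnion_le.trans (Finset.sum_le_sum fun b hb => ?_)))
        refine Finset.card_biUnion_le.trans ?_
        calc _ ≤ ∑ B ∈ monics F b, Fintype.card F ^ (n - 2 * b) := by
              refine Finset.sum_le_sum fun B hB => ?_
              obtain ⟨hBm, rfl⟩ := mem_monics.1 hB
              rw [← natDegree_pow]
              exact card_filter_dvd_monics_le (hBm.pow 2) n
          _ = _ := by
              simp only [hs, Finset.mem_filter] at hb
              rw [Finset.sum_const, card_monics, smul_eq_mul, ← pow_add]
              congr 1
              omega
    _ = ∑ b ∈ s, 2 ^ t * Fintype.card F ^ (n - b) := Finset.mul_sum _ _ _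
    _ ≤ ∑ b ∈ s, Fintype.card F ^ n := by
        refine Finset.sum_le_sum fun b hb => ?_
        simp only [hs, Finset.mem_filter] at hb
        have hq : 2 ≤ Fintype.card F := Fintype.one_lt_card
        calc _ ≤ Fintype.card F ^ t * Fintype.card F ^ (n - b) := by gcongr
          _ ≤ Fintype.card F ^ n := by
            rw [← pow_add]
            exact Nat.pow_le_pow_right (by omega) (by omega)
    _ ≤ _ := by
        rw [Finset.sum_const, smul_eq_mul]
        gcongr
        exact (Finset.card_filter_le _ _).trans (by simp)

open Classical in
theorem two_pow_mul_card_le (n t : ℕ) :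
    2 ^ t * ((monics F n).filter fun Q => 4 * t ≤ (factors Q).card).card ≤
      2 * ((n + 1) * Fintype.card F ^ n) := by
  have hsub : ((monics F n).filter fun Q => 4 * t ≤ (factors Q).card) ⊆
      ((monics F n).filter fun Q => ∃ A : F[X], Squarefree A ∧ A ∣ Q ∧ t ≤ (factors A).card) ∪
      ((monics F n).filter fun Q => ∃ B : F[X], B.Monic ∧ t ≤ B.natDegree ∧ B ^ 2 ∣ Q) := by
    intro Q hQ
    obtain ⟨hQ, hle⟩ := Finset.mem_filter.1 hQ
    obtain ⟨A, B, hA, hB, rfl⟩ := exists_squarefree_mul_sq (mem_monics.1 hQ).1.ne_zero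
    have hB0 := hB.ne_zero
    rw [sq, card_factors_mul hA.ne_zero (mul_ne_zero hB0 hB0), card_factors_mul hB0 hB0] at hle
    have := card_factors_le_natDegree hB0
    rw [Finset.mem_union, Finset.mem_filter, Finset.mem_filter]
    rcases le_total t (factors A).card with h | h
    · exact Or.inl ⟨hQ, A, hA, dvd_mul_right _ _, h⟩
    · exact Or.inr ⟨hQ, B, hB, by omega, dvd_mul_left _ _⟩
  have hfirst : 2 ^ t * ((monics F n).filter fun Q => ∃ A : F[X], Squarefree A ∧ A ∣ Q ∧
      t ≤ (factors A).card).card ≤ (n + 1) * Fintype.card F ^ n := by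
    refine le_trans ?_ (sum_card_monic_divisors_le n)
    rw [mul_comm, ← smul_eq_mul]
    refine (Finset.card_nsmul_le_sum _ _ _ fun Q hQ => ?_).trans
      (Finset.sum_le_sum_of_subset (Finset.filter_subset _ _))
    obtain ⟨hQ, A, hA, hdvd, hle⟩ := Finset.mem_filter.1 hQ
    exact (Nat.pow_le_pow_right two_pos hle).trans (two_pow_card_factors_le hA hdvd hQ)
  have hcard := (Finset.card_le_card hsub).trans (Finset.card_union_le _ _)
  have := Nat.mul_le_mul_left (2 ^ t) hcard
  have := two_pow_mul_card_sq_dvd_le (F := F) n t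
  rw [mul_add] at *
  omega

theorem card_monics_le_ncard (n : ℕ) :
    Fintype.card F ^ n ≤ Set.ncard {P : F[X] | P.Monic ∧ P.natDegree = 2 * n ∧
      ∀ i ≤ 2 * n, P.coeff i = P.coeff (2 * n - i)} := by
  rw [← card_monics, ← Set.ncard_coe_finset]
  refine Set.ncard_le_ncard_of_injOn (reciprocalLift n) ?_
    ((reciprocalLift_injOn n).mono fun Q hQ => (mem_monics.1 hQ).2.le)
    ((finite_monic_natDegree F (2 * n)).subset fun P hP => ⟨hP.1, hP.2.1⟩)
  intro Q hQ
  obtain ⟨hmonic, rfl⟩ := mem_monics.1 (Finset.mem_coe.1 hQ)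
  have hdeg := natDegree_reciprocalLift hmonic.ne_zero
  refine ⟨?_, hdeg, reflect_eq_self_iff.1 (reflect_reciprocalLift _ _)⟩
  rw [Monic, leadingCoeff, hdeg, coeff_reciprocalLift]
  exact hmonic

open Classical in
theorem ncard_le_card_monics (n t : ℕ) :
    Set.ncard {P : F[X] | P.Monic ∧ P.natDegree = 2 * n ∧
      (∀ i ≤ 2 * n, P.coeff i = P.coeff (2 * n - i)) ∧ 8 * t ≤ (factors P).card} ≤
      ((monics F n).filter fun Q => 4 * t ≤ (factors Q).card).card := by
  refine le_trans (Set.ncard_le_ncard (t := ((monics F n).filter fun Q =>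
    4 * t ≤ (factors Q).card).image (reciprocalLift n)) ?_ (Finset.finite_toSet _)) ?_
  · rintro P ⟨hP, hdeg, hsymm, hcard⟩
    have hrefl := reflect_eq_self_iff.2 hsymm
    obtain ⟨Q, hQdeg, rfl⟩ := exists_reciprocalLift_eq n hdeg.le hrefl
    have hlc : Q.coeff n = 1 := by
      rw [← coeff_reciprocalLift, ← hdeg]
      exact hP
    have hQn : Q.natDegree = n :=
      natDegree_eq_of_le_of_coeff_ne_zero hQdeg (by rw [hlc]; exact one_ne_zero)
    have hQ : Q.Monic := by rw [Monic, leadingCoeff, hQn, hlc]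
    refine Finset.mem_coe.2 (Finset.mem_image_of_mem _ (Finset.mem_filter.2
      ⟨mem_monics.2 ⟨hQ, hQn⟩, ?_⟩))
    have := card_factors_reciprocalLift_le hQ.ne_zero
    rw [hQn] at this
    omega
  · rw [Set.ncard_coe_finset]
    exact Finset.card_image_le

theorem two_pow_mul_ncard_le (n t : ℕ) :
    2 ^ t * Set.ncard {P : F[X] | P.Monic ∧ P.natDegree = 2 * n ∧
      (∀ i ≤ 2 * n, P.coeff i = P.coeff (2 * n - i)) ∧ 8 * t ≤ (factors P).card} ≤
      2 * ((n + 1) * Set.ncard {P : F[X] | P.Monic ∧ P.natDegree = 2 * n ∧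
        ∀ i ≤ 2 * n, P.coeff i = P.coeff (2 * n - i)}) :=
  (Nat.mul_le_mul_left _ (ncard_le_card_monics n t)).trans
    ((two_pow_mul_card_le n t).trans (by gcongr; exact card_monics_le_ncard n))

theorem two_mul_succ_le_rpow_mul_two_pow {k : ℝ} {n : ℕ} (hn : 2 ≤ n) :
    2 * ((n : ℝ) + 1) ≤ (n : ℝ) ^ (-k) * 2 ^ ⌊(k + 4) / Real.log 2 * Real.log n⌋₊ := by
  set t := ⌊(k + 4) / Real.log 2 * Real.log n⌋₊ with ht
  have hn' : (2 : ℝ) ≤ n := by exact_mod_cast hn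
  have hn0 : (0 : ℝ) < n := by linarith
  have hpow : (n : ℝ) ^ (k + 4) ≤ 2 ^ t * 2 := by
    have hlog : Real.log 2 ≠ 0 := (Real.log_pos one_lt_two).ne'
    calc (n : ℝ) ^ (k + 4) = 2 ^ ((k + 4) / Real.log 2 * Real.log n) := by
          rw [Real.rpow_def_of_pos hn0, Real.rpow_def_of_pos two_pos]
          congr 1
          field_simp
      _ ≤ 2 ^ ((t + 1 : ℕ) : ℝ) := by
          refine Real.rpow_le_rpow_of_exponent_le one_le_two ?_
          push_cast
          exact (Nat.lt_floor_add_one _).le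
      _ = 2 ^ t * 2 := by rw [Real.rpow_natCast, pow_succ]
  have h4 : (n : ℝ) ^ 4 = (n : ℝ) ^ (-k) * (n : ℝ) ^ (k + 4) := by
    rw [← Real.rpow_add hn0, neg_add_cancel_left]
    norm_cast
  have hle : (n : ℝ) ^ 4 ≤ (n : ℝ) ^ (-k) * (2 ^ t * 2) := by
    rw [h4]
    gcongr
  have h8 : 8 * (n : ℝ) ≤ n ^ 4 := by
    calc 8 * (n : ℝ) = 2 ^ 3 * n := by norm_num
      _ ≤ n ^ 3 * n := by gcongr
      _ = n ^ 4 := by ring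
  linarith

end ReciprocalLift

/-- For every `k > 0` there exists `N` such that for every `n ≥ 2` and every finite field
`F_q`, among the monic self-reciprocal polynomials `P ∈ F_q[x]` of degree `2n`
(i.e. `coeff P i = coeff P (2n - i)` for all `0 ≤ i ≤ 2n`), the number of those having
more than `N log n` monic irreducible factors (with multiplicity) is at most `n^{-k}`
times the total number. -/
theorem few_factors_SO (k : ℝ) (hk : 0 < k) :
    ∃ N : ℝ, ∀ n : ℕ, 2 ≤ n → ∀ q : ℕ, IsPrimePow q →
      ∀ (F : Type) [Field F] [Fintype F], Fintype.card F = q →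
      (Set.ncard {P : Polynomial F | P.Monic ∧ P.natDegree = 2 * n ∧
          (∀ i ≤ 2 * n, P.coeff i = P.coeff (2 * n - i)) ∧
          N * Real.log n <
            ((UniqueFactorizationMonoid.factors P).card : ℝ)} : ℝ) ≤
        (n : ℝ) ^ (-k) *
          (Set.ncard {P : Polynomial F | P.Monic ∧ P.natDegree = 2 * n ∧
            ∀ i ≤ 2 * n, P.coeff i = P.coeff (2 * n - i)} : ℝ) := by
  refine ⟨8 * ((k + 4) / Real.log 2), fun n hn q _ F _ _ _ => ?_⟩
  set t := ⌊(k + 4) / Real.log 2 * Real.log n⌋₊ with ht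
  set T := Set.ncard {P : Polynomial F | P.Monic ∧ P.natDegree = 2 * n ∧
    ∀ i ≤ 2 * n, P.coeff i = P.coeff (2 * n - i)} with hT
  have hfloor : (t : ℝ) ≤ (k + 4) / Real.log 2 * Real.log n := by
    have := Real.log_pos one_lt_two
    have := Real.log_natCast_nonneg n
    exact Nat.floor_le (by positivity)
  have hcount := ReciprocalLift.two_pow_mul_ncard_le (F := F) n t
  rw [← hT] at hcount
  have hcount : (2 : ℝ) ^ t * (Set.ncard {P : Polynomial F | P.Monic ∧ P.natDegree = 2 * n ∧
      (∀ i ≤ 2 * n, P.coeff i = P.coeff (2 * n - i)) ∧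
      8 * t ≤ (UniqueFactorizationMonoid.factors P).card} : ℝ) ≤ 2 * ((n + 1) * T) := by
    exact_mod_cast hcount
  have hpow : (0 : ℝ) < 2 ^ t := by positivity
  refine le_trans (Nat.cast_le.2 (Set.ncard_le_ncard ?_ ?_)) (le_of_mul_le_mul_left
    (hcount.trans ?_) hpow)
  · rintro P ⟨hP, hdeg, hsymm, hlt⟩
    refine ⟨hP, hdeg, hsymm, ?_⟩
    have : (8 * t : ℝ) ≤ ((UniqueFactorizationMonoid.factors P).card : ℝ) := by linarith
    exact_mod_cast this
  · exact (ReciprocalLift.finite_monic_natDegree F (2 * n)).subset fun P hP => ⟨hP.1, hP.2.1⟩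
  · have := mul_le_mul_of_nonneg_right (ReciprocalLift.two_mul_succ_le_rpow_mul_two_pow (k := k) hn)
      (Nat.cast_nonneg (α := ℝ) T)
    linarith
end

section
/- For every ε > 0 there exists k such that for every finite field F_q and every integer n ≥ 2, the set of g ∈ SL_n(F_q) whose characteristic polynomial has at least k·log n monic irreducible factors in F_q[x] (counted with multiplicity) has cardinality at most ε · |SL_n(F_q)|. -/
open Polynomial UniqueFactorizationMonoid

section Factorization

variable {F : Type*} [Field F]

lemma card_factors_eq_card_normalizedFactors {α : Type*} [CommMonoidWithZero α]
    [NormalizationMonoid α] [UniqueFactorizationMonoid α] (a : α) :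
    (factors a).card = (normalizedFactors a).card := by
  simp [normalizedFactors]

lemma card_factors_mul {p r : F[X]} (hp : p ≠ 0) (hr : r ≠ 0) :
    (factors (p * r)).card = (factors p).card + (factors r).card := by
  rw [← Multiset.card_add]
  exact Multiset.card_eq_card_of_rel (factors_mul hp hr)

lemma card_factors_le_natDegree {p : F[X]} (hp : p ≠ 0) :
    (factors p).card ≤ p.natDegree := by
  have h0 : (0 : F[X]) ∉ factors p := fun h => (irreducible_of_factor _ h).ne_zero rfl
  rw [← natDegree_eq_of_degree_eq (degree_eq_degree_of_associated (factors_prod hp)),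
    natDegree_multiset_prod _ h0]
  have := Multiset.card_nsmul_le_sum (s := (factors p).map natDegree) (a := 1) (by
    intro x hx
    obtain ⟨φ, hφ, rfl⟩ := Multiset.mem_map.1 hx
    exact (irreducible_of_factor _ hφ).natDegree_pos)
  simpa using this

open Classical in
lemma count_normalizedFactors_eq_sum {p φ : F[X]} (hp : p ≠ 0) (hφ : φ ∈ normalizedFactors p) :
    (normalizedFactors p).count φ =
      ∑ j ∈ Finset.Icc 1 p.natDegree, if φ ^ j ∣ p then 1 else 0 := by
  have hirr := irreducible_of_normalized_factor φ hφ
  have key (j : ℕ) : φ ^ j ∣ p ↔ j ≤ (normalizedFactors p).count φ := by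
    rw [pow_dvd_iff_le_emultiplicity, emultiplicity_eq_count_normalizedFactors hirr hp,
      normalize_normalized_factor φ hφ, Nat.cast_le]
  have hle : (normalizedFactors p).count φ ≤ p.natDegree := by
    have h := natDegree_le_of_dvd ((key _).2 le_rfl) hp
    rw [natDegree_pow] at h
    exact le_trans (Nat.le_mul_of_pos_right _ hirr.natDegree_pos) h
  rw [Finset.sum_boole]
  have : (Finset.Icc 1 p.natDegree).filter (fun j => φ ^ j ∣ p) =
      Finset.Icc 1 ((normalizedFactors p).count φ) := by
    ext j
    simp only [Finset.mem_filter, Finset.mem_Icc, key]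
    omega
  simp [this]

variable [Finite F]

lemma finite_setOf_natDegree_le (d : ℕ) : {p : F[X] | p.natDegree ≤ d}.Finite := by
  have : Finite (Fin (d + 1) → F) := inferInstance
  refine Set.Finite.of_finite_image (f := fun p (i : Fin (d + 1)) => p.coeff i)
    (Set.toFinite _) ?_
  intro p hp r hr h
  ext i
  by_cases hi : i < d + 1
  · exact congrFun h ⟨i, hi⟩
  · rw [coeff_eq_zero_of_natDegree_lt (lt_of_le_of_lt hp (by omega)),
      coeff_eq_zero_of_natDegree_lt (lt_of_le_of_lt hr (by omega))]

variable (F) in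
/-- The monic irreducible polynomials of degree `m` over a finite field. -/
noncomputable def monicIrreducibles (m : ℕ) : Finset F[X] :=
  Set.Finite.toFinset (s := {p | p.Monic ∧ Irreducible p ∧ p.natDegree = m})
    ((finite_setOf_natDegree_le m).subset fun _ hp => hp.2.2.le)

@[simp]
lemma mem_monicIrreducibles {m : ℕ} {p : F[X]} :
    p ∈ monicIrreducibles F m ↔ p.Monic ∧ Irreducible p ∧ p.natDegree = m := by
  simp [monicIrreducibles]

/-- The monic polynomials of degree `d` with constant coefficient `c` over a finite field. -/
noncomputable def monicsWithConst (d : ℕ) (c : F) : Finset F[X] :=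
  Set.Finite.toFinset (s := {p | p.Monic ∧ p.natDegree = d ∧ p.coeff 0 = c})
    ((finite_setOf_natDegree_le d).subset fun _ hp => hp.2.1.le)

@[simp]
lemma mem_monicsWithConst {d : ℕ} {c : F} {p : F[X]} :
    p ∈ monicsWithConst d c ↔ p.Monic ∧ p.natDegree = d ∧ p.coeff 0 = c := by
  simp [monicsWithConst]

lemma card_monicsWithConst_le (d : ℕ) (c : F) :
    (monicsWithConst d c).card ≤ Nat.card F ^ (d - 1) := by
  have := Fintype.ofFinite F
  have h := Finset.card_le_card_of_injOn (s := monicsWithConst d c)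
    (t := (Finset.univ : Finset (Fin (d - 1) → F)))
    (fun p (i : Fin (d - 1)) => p.coeff (i + 1)) (fun _ _ => by simp) (by
      intro p hp r hr h
      simp only [Finset.mem_coe, mem_monicsWithConst] at hp hr
      ext i
      rcases Nat.eq_zero_or_pos i with rfl | hi
      · rw [hp.2.2, hr.2.2]
      rcases lt_trichotomy i d with hid | rfl | hid
      · have := congrFun h ⟨i - 1, by omega⟩
        simpa [Nat.sub_add_cancel hi] using this
      · have h1 := hp.1.coeff_natDegree
        have h2 := hr.1.coeff_natDegree
        rw [hp.2.1] at h1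
        rw [hr.2.1] at h2
        rw [h1, h2]
      · rw [coeff_eq_zero_of_natDegree_lt (hp.2.1.trans_lt hid),
          coeff_eq_zero_of_natDegree_lt (hr.2.1.trans_lt hid)])
  simpa [Nat.card_eq_fintype_card] using h

open Classical in
lemma card_monicsWithConst_filter_dvd_le {d : ℕ} {c : F} (hc : c ≠ 0) {s : F[X]} (hs : s.Monic) :
    ((monicsWithConst d c).filter (s ∣ ·)).card ≤ Nat.card F ^ (d - s.natDegree - 1) := by
  refine le_trans ?_ (card_monicsWithConst_le (d - s.natDegree) (c / s.coeff 0))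
  refine Finset.card_le_card_of_injOn (· /ₘ s) ?_ ?_
  · intro p hp
    simp only [Finset.coe_filter, mem_monicsWithConst, Set.mem_ofPred_eq] at hp
    obtain ⟨⟨hpm, hpd, hpc⟩, t, rfl⟩ := hp
    have ht : t.Monic := hs.of_mul_monic_left hpm
    rw [hs.natDegree_mul ht] at hpd
    rw [mul_coeff_zero] at hpc
    have hs0 : s.coeff 0 ≠ 0 := by rintro h; simp [h] at hpc; exact hc hpc.symm
    simp only [Finset.mem_coe, mem_monicsWithConst, mul_divByMonic_cancel_left _ hs]
    exact ⟨ht, by omega, by rw [← hpc]; field_simp⟩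
  · intro p hp r hr h
    simp only [Finset.coe_filter, Set.mem_ofPred_eq] at hp hr
    obtain ⟨-, t, rfl⟩ := hp
    obtain ⟨-, u, rfl⟩ := hr
    simp only [mul_divByMonic_cancel_left _ hs] at h
    rw [h]

lemma mul_card_monicIrreducibles_le (m : ℕ) :
    m * (monicIrreducibles F m).card ≤ Nat.card F ^ m := by
  rcases Nat.eq_zero_or_pos m with rfl | hm
  · simp
  have hq : 1 < Nat.card F := Finite.one_lt_card
  have hdvd : ∏ p ∈ monicIrreducibles F m, p ∣ X ^ Nat.card F ^ m - X := by
    refine Finset.prod_dvd_of_coprime ?_ ?_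
    · intro p hp r hr hpr
      simp only [Finset.mem_coe, mem_monicIrreducibles] at hp hr
      refine (hp.2.1.coprime_iff_not_dvd).2 fun h => hpr ?_
      exact eq_of_monic_of_associated hp.1 hr.1 (hp.2.1.associated_of_dvd hr.2.1 h)
    · intro p hp
      rw [mem_monicIrreducibles] at hp
      exact hp.2.1.natDegree_dvd_iff_dvd_X_pow_card_pow_sub_X.1 hp.2.2.dvd
  have h := natDegree_le_of_dvd hdvd (FiniteField.X_pow_card_pow_sub_X_ne_zero _ hm.ne' hq)
  rw [FiniteField.X_pow_card_pow_sub_X_natDegree_eq _ hm.ne' hq,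
    natDegree_prod_of_monic _ _ fun p hp => (mem_monicIrreducibles.1 hp).1,
    Finset.sum_congr rfl fun p hp => (mem_monicIrreducibles.1 hp).2.2] at h
  simpa [mul_comm] using h

open Classical in
lemma card_factors_le_one_add_sum {p : F[X]} (hp : p.Monic) :
    (factors p).card ≤ 1 + ∑ m ∈ Finset.Icc 1 p.natDegree, ∑ φ ∈ monicIrreducibles F m,
      ∑ j ∈ Finset.Icc 1 p.natDegree, if j * m < p.natDegree ∧ φ ^ j ∣ p then 1 else 0 := by
  have hp0 := hp.ne_zero
  set N := normalizedFactors p with hN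
  have hmonic {φ : F[X]} (hφ : φ ∈ N) : φ.Monic := by
    rw [← normalize_normalized_factor φ hφ]
    exact monic_normalize (irreducible_of_normalized_factor φ hφ).ne_zero
  have hsplit : (factors p).card = ∑ φ ∈ N.toFinset, ∑ j ∈ Finset.Icc 1 p.natDegree,
        (if ¬ j * φ.natDegree < p.natDegree ∧ φ ^ j ∣ p then 1 else 0) +
      ∑ φ ∈ N.toFinset, ∑ j ∈ Finset.Icc 1 p.natDegree,
        (if j * φ.natDegree < p.natDegree ∧ φ ^ j ∣ p then 1 else 0) := by
    rw [card_factors_eq_card_normalizedFactors, ← Multiset.toFinset_sum_count_eq,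
      ← Finset.sum_add_distrib]
    refine Finset.sum_congr rfl fun φ hφ => ?_
    rw [count_normalizedFactors_eq_sum hp0 (Multiset.mem_toFinset.1 hφ),
      ← Finset.sum_add_distrib]
    refine Finset.sum_congr rfl fun j _ => ?_
    by_cases h1 : j * φ.natDegree < p.natDegree <;> simp [h1]
  rw [hsplit]
  refine add_le_add ?_ ?_
  · rw [← Finset.sum_product', Finset.sum_boole, Nat.cast_id, Finset.card_le_one]
    have hpow {φ : F[X]} {j : ℕ} (hφ : φ ∈ N) (hj : ¬ j * φ.natDegree < p.natDegree)
        (hdvd : φ ^ j ∣ p) : φ ^ j = p := by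
      refine eq_of_dvd_of_natDegree_le_of_leadingCoeff hdvd ?_ ?_
      · rw [natDegree_pow]; exact not_lt.1 hj
      · rw [((hmonic hφ).pow j).leadingCoeff, hp.leadingCoeff]
    rintro ⟨φ, i⟩ h1 ⟨ψ, j⟩ h2
    simp only [Finset.mem_filter, Finset.mem_product, Multiset.mem_toFinset,
      Finset.mem_Icc] at h1 h2
    have e1 := hpow h1.1.1 h1.2.1 h1.2.2
    have e2 := hpow h2.1.1 h2.2.1 h2.2.2
    have iφ := irreducible_of_normalized_factor φ h1.1.1
    have iψ := irreducible_of_normalized_factor ψ h2.1.1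
    have hd' : φ ∣ ψ := iφ.prime.dvd_of_dvd_pow (n := j) (by
      rw [e2, ← e1]; exact dvd_pow_self _ (by omega))
    obtain rfl : φ = ψ := eq_of_monic_of_associated (hmonic h1.1.1) (hmonic h2.1.1)
      (iφ.associated_of_dvd iψ hd')
    have : i * φ.natDegree = j * φ.natDegree := by
      rw [← natDegree_pow, ← natDegree_pow, e1, e2]
    simpa using Nat.eq_of_mul_eq_mul_right iφ.natDegree_pos this
  · rw [← Finset.sum_fiberwise_of_maps_to (g := natDegree) (t := Finset.Icc 1 p.natDegree)]
    · refine Finset.sum_le_sum fun m _ => ?_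
      rw [Finset.sum_congr rfl (g := fun φ => ∑ j ∈ Finset.Icc 1 p.natDegree,
        if j * m < p.natDegree ∧ φ ^ j ∣ p then 1 else 0) (by
          intro φ hφ
          rw [(Finset.mem_filter.1 hφ).2])]
      refine Finset.sum_le_sum_of_subset ?_
      intro φ hφ
      simp only [Finset.mem_filter, Multiset.mem_toFinset] at hφ
      exact mem_monicIrreducibles.2
        ⟨hmonic hφ.1, irreducible_of_normalized_factor φ hφ.1, hφ.2⟩
    · intro φ hφ
      rw [Multiset.mem_toFinset] at hφ
      exact Finset.mem_Icc.2 ⟨(irreducible_of_normalized_factor φ hφ).natDegree_pos,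
        natDegree_le_of_dvd (dvd_of_mem_normalizedFactors hφ) hp0⟩

/-- On average, a monic polynomial of degree `d` with a given nonzero constant coefficient has
`O(log d)` irreducible factors. -/
lemma sum_card_factors_monicsWithConst_le {d : ℕ} {c : F} (hc : c ≠ 0) :
    ∑ p ∈ monicsWithConst d c, ((factors p).card : ℝ) ≤
      (Nat.card F : ℝ) ^ (d - 1) * (3 + 2 * Real.log d) := by
  classical
  have hq : (2 : ℝ) ≤ Nat.card F := by exact_mod_cast Finite.one_lt_card (α := F)
  set q : ℝ := (Nat.card F : ℝ) with hqdef
  have hq0 : 0 < q := by linarith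
  have hgeom {m : ℕ} (hm : 1 ≤ m) :
      ∑ j ∈ Finset.Icc 1 d, (q ^ m)⁻¹ ^ j ≤ 2 * (q ^ m)⁻¹ := by
    set x := (q ^ m)⁻¹ with hx
    have hx0 : 0 < x := by positivity
    have hx1 : x ≤ 1 / 2 := by
      rw [hx, one_div]
      refine inv_anti₀ two_pos (hq.trans ?_)
      exact le_self_pow₀ (by linarith) (by omega)
    have hshift (e : ℕ) : ∑ j ∈ Finset.Icc 1 e, x ^ j = x * ∑ j ∈ Finset.range e, x ^ j := by
      induction e with
      | zero => simp
      | succ e ih =>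
        rw [Finset.sum_Icc_succ_top (by omega), ih, Finset.sum_range_succ]
        ring
    rw [hshift, mul_comm 2 x]
    refine mul_le_mul_of_nonneg_left ?_ hx0.le
    have h1 : (∑ j ∈ Finset.range d, x ^ j) * (1 - x) ≤ 1 := by
      rw [geom_sum_mul_neg]; linarith [pow_nonneg hx0.le d]
    nlinarith [Finset.sum_nonneg (s := Finset.range d) fun j _ => pow_nonneg hx0.le j]
  have hterm {m : ℕ} (hm : 1 ≤ m) : ∑ φ ∈ monicIrreducibles F m, ∑ j ∈ Finset.Icc 1 d,
      ∑ p ∈ monicsWithConst d c, (if j * m < d ∧ φ ^ j ∣ p then (1 : ℝ) else 0) ≤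
        q ^ (d - 1) * (2 * (m : ℝ)⁻¹) := by
    calc _ ≤ ∑ φ ∈ monicIrreducibles F m, ∑ j ∈ Finset.Icc 1 d,
          q ^ (d - 1) * (q ^ m)⁻¹ ^ j := by
          refine Finset.sum_le_sum fun φ hφ => Finset.sum_le_sum fun j _ => ?_
          rw [mem_monicIrreducibles] at hφ
          by_cases hjm : j * m < d
          · simp only [hjm, true_and, Finset.sum_boole]
            have h := card_monicsWithConst_filter_dvd_le (d := d) hc (hφ.1.pow j)
            rw [natDegree_pow, hφ.2.2] at h
            have h' : (((monicsWithConst d c).filter (φ ^ j ∣ ·)).card : ℝ) ≤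
                q ^ (d - j * m - 1) := by rw [hqdef]; exact_mod_cast h
            refine h'.trans (le_of_eq ?_)
            rw [inv_pow, ← pow_mul, mul_comm m j, eq_mul_inv_iff_mul_eq₀ (by positivity),
              ← pow_add]
            congr 1
            omega
          · simp only [hjm, false_and, if_false, Finset.sum_const_zero]
            positivity
      _ = (monicIrreducibles F m).card *
          (q ^ (d - 1) * ∑ j ∈ Finset.Icc 1 d, (q ^ m)⁻¹ ^ j) := by
          rw [Finset.sum_const, nsmul_eq_mul, ← Finset.mul_sum]
      _ ≤ (monicIrreducibles F m).card * (q ^ (d - 1) * (2 * (q ^ m)⁻¹)) := by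
          gcongr; exact hgeom hm
      _ ≤ (q ^ m * (m : ℝ)⁻¹) * (q ^ (d - 1) * (2 * (q ^ m)⁻¹)) := by
          gcongr
          rw [le_mul_inv_iff₀ (by positivity), mul_comm]
          rw [hqdef]
          exact_mod_cast mul_card_monicIrreducibles_le (F := F) m
      _ = _ := by field_simp
  calc ∑ p ∈ monicsWithConst d c, ((factors p).card : ℝ)
      ≤ ∑ p ∈ monicsWithConst d c, (1 + ∑ m ∈ Finset.Icc 1 d, ∑ φ ∈ monicIrreducibles F m,
          ∑ j ∈ Finset.Icc 1 d, if j * m < d ∧ φ ^ j ∣ p then (1 : ℝ) else 0) := by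
        refine Finset.sum_le_sum fun p hp => ?_
        rw [mem_monicsWithConst] at hp
        have h := card_factors_le_one_add_sum hp.1
        rw [hp.2.1] at h
        exact_mod_cast h
    _ = (monicsWithConst d c).card + ∑ m ∈ Finset.Icc 1 d, ∑ φ ∈ monicIrreducibles F m,
          ∑ j ∈ Finset.Icc 1 d, ∑ p ∈ monicsWithConst d c,
            if j * m < d ∧ φ ^ j ∣ p then (1 : ℝ) else 0 := by
        rw [Finset.sum_add_distrib, Finset.sum_const, nsmul_one, Finset.sum_comm]
        congr 1
        refine Finset.sum_congr rfl fun m _ => ?_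
        rw [Finset.sum_comm]
        refine Finset.sum_congr rfl fun φ _ => ?_
        rw [Finset.sum_comm]
    _ ≤ q ^ (d - 1) + ∑ m ∈ Finset.Icc 1 d, q ^ (d - 1) * (2 * (m : ℝ)⁻¹) := by
        refine add_le_add ?_ (Finset.sum_le_sum fun m hm => hterm (Finset.mem_Icc.1 hm).1)
        rw [hqdef]
        exact_mod_cast card_monicsWithConst_le d c
    _ = q ^ (d - 1) * (1 + 2 * (harmonic d : ℝ)) := by
        rw [← Finset.mul_sum, ← Finset.mul_sum, harmonic_eq_sum_Icc]
        push_cast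
        ring
    _ ≤ _ := by
        refine mul_le_mul_of_nonneg_left ?_ (by positivity)
        linarith [harmonic_le_one_add_log d]

end Factorization

section Annihilator

open Matrix

variable {F ι : Type*} [Field F] [Fintype ι] [DecidableEq ι]

/-- The linear map sending a polynomial `r` to `r(A) v`. -/
noncomputable def polynomialOrbit (A : Matrix ι ι F) (v : ι → F) : F[X] →ₗ[F] (ι → F) :=
  (Matrix.mulVecBilin F F).flip v ∘ₗ (aeval A).toLinearMap

@[simp]
lemma polynomialOrbit_apply (A : Matrix ι ι F) (v : ι → F) (r : F[X]) :
    polynomialOrbit A v r = aeval A r *ᵥ v := rfl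

lemma polynomialOrbit_mul (A : Matrix ι ι F) (v : ι → F) (r s : F[X]) :
    polynomialOrbit A v (r * s) = aeval A r *ᵥ polynomialOrbit A v s := by
  simp [mulVec_mulVec]

/-- `p` is the minimal polynomial of the vector `v` with respect to the matrix `A`. -/
def IsVectorMinpoly (A : Matrix ι ι F) (v : ι → F) (p : F[X]) : Prop :=
  p.Monic ∧ ∀ r, polynomialOrbit A v r = 0 ↔ p ∣ r

lemma exists_isVectorMinpoly (A : Matrix ι ι F) (v : ι → F) : ∃ p, IsVectorMinpoly A v p := by
  let I : Ideal F[X] :=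
    { carrier := {r | polynomialOrbit A v r = 0}
      add_mem' := fun {a b} ha hb => by
        simp only [Set.mem_ofPred_eq] at ha hb ⊢
        rw [map_add, ha, hb, add_zero]
      zero_mem' := map_zero _
      smul_mem' := fun c x hx => by
        simp only [Set.mem_ofPred_eq, smul_eq_mul] at hx ⊢
        rw [polynomialOrbit_mul, hx, mulVec_zero] }
  have hmem (r : F[X]) : polynomialOrbit A v r = 0 ↔ Submodule.IsPrincipal.generator I ∣ r :=
    Submodule.IsPrincipal.mem_iff_generator_dvd I
  set g := Submodule.IsPrincipal.generator I
  have hg : g ≠ 0 := by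
    rintro h
    have := (hmem A.charpoly).1 (by simp [Matrix.aeval_self_charpoly])
    rw [h, zero_dvd_iff] at this
    exact A.charpoly_monic.ne_zero this
  refine ⟨g * C g.leadingCoeff⁻¹, monic_mul_leadingCoeff_inv hg, fun r => ?_⟩
  rw [hmem]
  refine (Associated.dvd_iff_dvd_left ?_)
  exact (associated_mul_unit_right g _ (isUnit_C.2 (by simpa using hg)))

namespace IsVectorMinpoly

variable {A : Matrix ι ι F} {v : ι → F} {p : F[X]}

lemma dvd_charpoly (h : IsVectorMinpoly A v p) : p ∣ A.charpoly :=
  (h.2 _).1 (by simp [Matrix.aeval_self_charpoly])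

lemma natDegree_le (h : IsVectorMinpoly A v p) : p.natDegree ≤ Fintype.card ι := by
  rw [← A.charpoly_natDegree_eq_dim]
  exact natDegree_le_of_dvd h.dvd_charpoly A.charpoly_monic.ne_zero

lemma coeff_zero_ne_zero (h : IsVectorMinpoly A v p) (hA : A.det ≠ 0) : p.coeff 0 ≠ 0 := by
  obtain ⟨r, hr⟩ := h.dvd_charpoly
  intro h0
  rw [A.det_eq_sign_charpoly_coeff, hr, mul_coeff_zero, h0] at hA
  simp at hA

lemma eq_charpoly (h : IsVectorMinpoly A v p) (hd : p.natDegree = Fintype.card ι) :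
    p = A.charpoly := by
  refine eq_of_dvd_of_natDegree_le_of_leadingCoeff h.dvd_charpoly ?_ ?_
  · rw [A.charpoly_natDegree_eq_dim, hd]
  · rw [h.1.leadingCoeff, A.charpoly_monic.leadingCoeff]

lemma coeff_zero_eq (h : IsVectorMinpoly A v p) (hd : p.natDegree = Fintype.card ι) :
    p.coeff 0 = (-1) ^ Fintype.card ι * A.det := by
  rw [A.det_eq_sign_charpoly_coeff, ← h.eq_charpoly hd, ← mul_assoc, ← mul_pow]
  simp

lemma natDegree_ne_zero (h : IsVectorMinpoly A v p) (hv : v ≠ 0) : p.natDegree ≠ 0 := by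
  intro h0
  have h1 := (h.2 1).2 (by rw [h.1.natDegree_eq_zero.1 h0])
  simp at h1
  exact hv h1

lemma card_factors_charpoly_le (h : IsVectorMinpoly A v p) :
    (factors A.charpoly).card ≤ (factors p).card + (Fintype.card ι - p.natDegree) := by
  obtain ⟨r, hr⟩ := h.dvd_charpoly
  have hr' : r.Monic := h.1.of_mul_monic_left (hr ▸ A.charpoly_monic)
  have hd : p.natDegree + r.natDegree = Fintype.card ι := by
    rw [← h.1.natDegree_mul hr', ← hr, A.charpoly_natDegree_eq_dim]
  rw [hr, card_factors_mul h.1.ne_zero hr'.ne_zero]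
  have := card_factors_le_natDegree hr'.ne_zero
  omega

lemma range_polynomialOrbit_lt_top (h : IsVectorMinpoly A v p)
    (hd : p.natDegree < Fintype.card ι) : LinearMap.range (polynomialOrbit A v) < ⊤ := by
  rw [lt_top_iff_ne_top]
  intro htop
  have hsurj : Function.Surjective
      ((polynomialOrbit A v).domRestrict (degreeLT F p.natDegree)) := by
    intro w
    obtain ⟨r, rfl⟩ := LinearMap.range_eq_top.1 htop w
    refine ⟨⟨r %ₘ p, ?_⟩, ?_⟩
    · rw [mem_degreeLT, ← degree_eq_natDegree h.1.ne_zero]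
      exact degree_modByMonic_lt r h.1
    · rw [LinearMap.domRestrict_apply]
      have h2 := (h.2 (p * (r /ₘ p))).2 (dvd_mul_right _ _)
      conv_rhs => rw [← modByMonic_add_div r p, map_add, h2, add_zero]
  have hle := LinearMap.finrank_le_finrank_of_surjective
    (f := (polynomialOrbit A v).domRestrict (degreeLT F p.natDegree) ∘ₗ
      (degreeLTEquiv F p.natDegree).symm.toLinearMap)
    (by simpa using hsurj)
  rw [Module.finrank_pi, Module.finrank_pi, Fintype.card_fin] at hle
  omega

end IsVectorMinpoly

lemma exists_det_eq_and_forall_mulVec_eq_self {W : Submodule F (ι → F)} (hW : W < ⊤) (c : F) :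
    ∃ T : Matrix ι ι F, T.det = c ∧ ∀ w ∈ W, T *ᵥ w = w := by
  obtain ⟨f, hf, hWf⟩ := Submodule.exists_le_ker_of_lt_top W hW
  obtain ⟨u₀, hu₀⟩ : ∃ u, f u ≠ 0 := by
    by_contra! h
    exact hf (LinearMap.ext h)
  obtain ⟨u, hu⟩ : ∃ u, f u = c - 1 := ⟨((c - 1) / f u₀) • u₀, by simp [hu₀]⟩
  have hf' (w : ι → F) : (fun i => f (Pi.single i 1)) ⬝ᵥ w = f w := by
    conv_rhs => rw [pi_eq_sum_univ' w, map_sum]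
    simp [dotProduct, mul_comm]
  refine ⟨1 + replicateCol Unit u * replicateRow Unit fun i => f (Pi.single i 1), ?_, ?_⟩
  · rw [det_one_add_replicateCol_mul_replicateRow, hf', hu]
    ring
  · intro w hw
    have h0 : f w = 0 := hWf hw
    have : replicateRow Unit (fun i => f (Pi.single i 1)) *ᵥ w = 0 := by
      ext i
      exact (hf' w).trans h0
    rw [add_mulVec, one_mulVec, ← mulVec_mulVec, this, mulVec_zero, add_zero]

/-- Pairs `(matrix, vector)` with the same vector minimal polynomial have conjugate orbits; the
conjugating matrix may be taken of determinant `1` if the orbit does not span. -/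
lemma IsVectorMinpoly.exists_mulVec_polynomialOrbit_eq {A₀ A : Matrix ι ι F} {v₀ v : ι → F}
    {p : F[X]} (h₀ : IsVectorMinpoly A₀ v₀ p) (h : IsVectorMinpoly A v p) :
    ∃ B : GL ι F, (∀ r, B.val *ᵥ polynomialOrbit A₀ v₀ r = polynomialOrbit A v r) ∧
      (p.natDegree < Fintype.card ι → GeneralLinearGroup.det B = 1) := by
  have hker : LinearMap.ker (polynomialOrbit A₀ v₀) = LinearMap.ker (polynomialOrbit A v) := by
    ext r
    rw [LinearMap.mem_ker, LinearMap.mem_ker, h₀.2, h.2]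
  obtain ⟨g, hg⟩ := Submodule.exists_linearEquiv_restrict_eq
    ((polynomialOrbit A₀ v₀).quotKerEquivRange.symm ≪≫ₗ Submodule.quotEquivOfEq _ _ hker ≪≫ₗ
      (polynomialOrbit A v).quotKerEquivRange)
  let B : GL ι F := ⟨LinearMap.toMatrix' g.toLinearMap, LinearMap.toMatrix' g.symm.toLinearMap,
    by rw [← LinearMap.toMatrix'_comp]; simp, by rw [← LinearMap.toMatrix'_comp]; simp⟩
  have hB (r : F[X]) : B.val *ᵥ polynomialOrbit A₀ v₀ r = polynomialOrbit A v r := by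
    have h1 := hg ⟨polynomialOrbit A₀ v₀ r, r, rfl⟩
    have h2 : (polynomialOrbit A₀ v₀).quotKerEquivRange.symm ⟨polynomialOrbit A₀ v₀ r, r, rfl⟩ =
        Submodule.Quotient.mk r := LinearMap.quotKerEquivRange_symm_apply_image _ _ _
    simp only [LinearEquiv.trans_apply, h2, Submodule.quotEquivOfEq_mk,
      LinearMap.quotKerEquivRange_apply_mk] at h1
    rw [h1]
    exact LinearMap.toMatrix'_mulVec _ _
  by_cases hd : p.natDegree < Fintype.card ι
  · obtain ⟨T, hT, hTW⟩ := exists_det_eq_and_forall_mulVec_eq_self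
      (h₀.range_polynomialOrbit_lt_top hd) (B.val.det)⁻¹
    have hBdet : B.val.det ≠ 0 := (B.isUnit.map detMonoidHom).ne_zero
    obtain ⟨U, rfl⟩ : IsUnit T := by
      rw [isUnit_iff_isUnit_det, hT]
      exact (inv_ne_zero hBdet).isUnit
    refine ⟨B * U, fun r => ?_, fun _ => Units.ext ?_⟩
    · rw [Units.val_mul, ← mulVec_mulVec, hTW _ ⟨r, rfl⟩, hB]
    · rw [map_mul, Units.val_mul, GeneralLinearGroup.val_det_apply,
        GeneralLinearGroup.val_det_apply, hT, mul_inv_cancel₀ hBdet, Units.val_one]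
  · exact ⟨B, hB, fun h => absurd h hd⟩

lemma IsVectorMinpoly.exists_injOn {A₀ : GL ι F} {v₀ : ι → F} {p : F[X]}
    (h₀ : IsVectorMinpoly A₀.val v₀ p) :
    ∃ K : GL ι F × (ι → F) → GL ι F, Set.InjOn K {x | IsVectorMinpoly x.1.val x.2 p} ∧
      (p.natDegree < Fintype.card ι → ∀ x, IsVectorMinpoly x.1.val x.2 p →
        GeneralLinearGroup.det (K x) =
          (GeneralLinearGroup.det A₀)⁻¹ * GeneralLinearGroup.det x.1) := by
  classical
  let P (T : F[X] →ₗ[F] (ι → F)) (B : GL ι F) : Prop :=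
    (∀ r, B.val *ᵥ polynomialOrbit A₀.val v₀ r = T r) ∧
      (p.natDegree < Fintype.card ι → GeneralLinearGroup.det B = 1)
  let S (T : F[X] →ₗ[F] (ι → F)) : GL ι F := if h : ∃ B, P T B then h.choose else 1
  have hS (x : GL ι F × (ι → F)) (hx : IsVectorMinpoly x.1.val x.2 p) :
      P (polynomialOrbit x.1.val x.2) (S (polynomialOrbit x.1.val x.2)) := by
    have h : ∃ B, P (polynomialOrbit x.1.val x.2) B := h₀.exists_mulVec_polynomialOrbit_eq hx
    simp only [S, dif_pos h]
    exact h.choose_spec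
  let K (x : GL ι F × (ι → F)) : GL ι F :=
    S (polynomialOrbit x.1.val x.2) * A₀⁻¹ * (S (polynomialOrbit x.1.val x.2))⁻¹ * x.1 *
      S (polynomialOrbit x.1.val x.2)
  have hinv (B : GL ι F) {a b : ι → F} (h : B.val *ᵥ a = b) : (B⁻¹).val *ᵥ b = a := by
    rw [← h, mulVec_mulVec, ← Units.val_mul, inv_mul_cancel, Units.val_one, one_mulVec]
  have hX (A : Matrix ι ι F) (v : ι → F) (r : F[X]) :
      A *ᵥ polynomialOrbit A v r = polynomialOrbit A v (X * r) := by
    rw [polynomialOrbit_mul, aeval_X]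
  have hK (x : GL ι F × (ι → F)) (hx : IsVectorMinpoly x.1.val x.2 p) (r : F[X]) :
      (K x).val *ᵥ polynomialOrbit A₀.val v₀ r = polynomialOrbit x.1.val x.2 r := by
    have hB := (hS x hx).1
    simp only [K, Units.val_mul, ← mulVec_mulVec]
    rw [hB, hX, hinv _ (hB _), hinv A₀ (hX A₀.val v₀ r), hB]
  refine ⟨K, ?_, ?_⟩
  · rintro x hx y hy hxy
    have hT : polynomialOrbit x.1.val x.2 = polynomialOrbit y.1.val y.2 :=
      LinearMap.ext fun r => by rw [← hK x hx, ← hK y hy, hxy]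
    have hv : x.2 = y.2 := by simpa using LinearMap.congr_fun hT 1
    simp only [K, hT, mul_left_inj, mul_right_inj] at hxy
    exact Prod.ext hxy hv
  · intro hd x hx
    simp only [K, map_mul, map_inv, (hS x hx).2 hd]
    simp

variable [Finite F]

lemma card_ker_det_le_card_SL :
    Nat.card (GeneralLinearGroup.det : GL ι F →* Fˣ).ker ≤
      Nat.card (SpecialLinearGroup ι F) := by
  refine Nat.card_le_card_of_injective (fun x : (GeneralLinearGroup.det : GL ι F →* Fˣ).ker =>
    (⟨x.1.val, congrArg Units.val x.2⟩ : SpecialLinearGroup ι F)) ?_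
  intro x y h
  exact Subtype.ext (Units.ext (congrArg Subtype.val h))

lemma card_GL_le_mul_card_SL :
    Nat.card (GL ι F) ≤ (Nat.card F - 1) * Nat.card (SpecialLinearGroup ι F) := by
  classical
  have := Fintype.ofFinite F
  have h : (GeneralLinearGroup.det : GL ι F →* Fˣ).ker.index ≤ Nat.card F - 1 := by
    rw [Subgroup.index_ker, ← Nat.card_units]
    exact Subgroup.card_le_card_group _
  rw [← (GeneralLinearGroup.det : GL ι F →* Fˣ).ker.card_mul_index, mul_comm]
  exact Nat.mul_le_mul h card_ker_det_le_card_SL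

lemma ncard_setOf_isVectorMinpoly_le (p : F[X]) :
    {x : SpecialLinearGroup ι F × (ι → F) |
        IsVectorMinpoly (x.1 : Matrix ι ι F) x.2 p}.ncard ≤
      (if p.natDegree < Fintype.card ι then 1 else Nat.card F - 1) *
        Nat.card (SpecialLinearGroup ι F) := by
  classical
  set s := {x : SpecialLinearGroup ι F × (ι → F) |
    IsVectorMinpoly (x.1 : Matrix ι ι F) x.2 p} with hs
  rcases s.eq_empty_or_nonempty with h | ⟨⟨A₀, v₀⟩, h₀⟩
  · simp [h]
  have h₀' : IsVectorMinpoly (SpecialLinearGroup.toGL A₀).val v₀ p := h₀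
  obtain ⟨K, hK, hdet⟩ := h₀'.exists_injOn
  have hinj : Set.InjOn (K ∘ Prod.map SpecialLinearGroup.toGL id) s :=
    hK.comp
      (SpecialLinearGroup.toGL_injective.prodMap Function.injective_id).injOn fun _ hx => hx
  split_ifs with hd
  · rw [one_mul]
    refine le_trans ?_ card_ker_det_le_card_SL
    refine (Set.ncard_le_ncard_of_injOn (t := ((GeneralLinearGroup.det : GL ι F →* Fˣ).ker :
      Set (GL ι F))) _ ?_ hinj (Set.toFinite _)).trans_eq (Nat.card_coe_set_eq _).symm
    intro x hx
    have hx' : IsVectorMinpoly (SpecialLinearGroup.toGL x.1).val x.2 p := hx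
    have h1 (A : SpecialLinearGroup ι F) :
        GeneralLinearGroup.det (SpecialLinearGroup.toGL A) = 1 := Units.ext A.2
    refine MonoidHom.mem_ker.2 ?_
    exact (hdet hd (SpecialLinearGroup.toGL x.1, x.2) hx').trans (by simp [h1])
  · refine le_trans ?_ card_GL_le_mul_card_SL
    rw [← Set.ncard_univ]
    exact Set.ncard_le_ncard_of_injOn _ (fun _ _ => Set.mem_univ _) hinj (Set.toFinite _)

end Annihilator

section Average

open Matrix

lemma sub_one_mul_sum_pow (q : ℝ) (n : ℕ) :
    (q - 1) * ∑ d ∈ Finset.Icc 1 n, q ^ (d - 1) = q ^ n - 1 := by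
  induction n with
  | zero => simp
  | succ m ih =>
    rw [Finset.sum_Icc_succ_top (by omega), mul_add, ih, Nat.add_sub_cancel]
    ring

lemma sub_one_mul_sum_pow_mul_le {q : ℝ} (hq : 2 ≤ q) (n : ℕ) :
    (q - 1) * ∑ d ∈ Finset.Icc 1 n, q ^ (d - 1) * ((n : ℝ) - d) ≤ q ^ n - 1 := by
  induction n with
  | zero => simp
  | succ n ih =>
    have hsplit : ∑ d ∈ Finset.Icc 1 n, q ^ (d - 1) * (((n + 1 : ℕ) : ℝ) - d) =
        ∑ d ∈ Finset.Icc 1 n, q ^ (d - 1) * ((n : ℝ) - d) +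
          ∑ d ∈ Finset.Icc 1 n, q ^ (d - 1) := by
      rw [← Finset.sum_add_distrib]
      refine Finset.sum_congr rfl fun d _ => ?_
      push_cast
      ring
    rw [Finset.sum_Icc_succ_top (by omega), sub_self, mul_zero, add_zero, hsplit, mul_add,
      sub_one_mul_sum_pow]
    have : 1 ≤ q ^ n := one_le_pow₀ (by linarith)
    rw [pow_succ]
    nlinarith

/-- The average number of irreducible factors of the characteristic polynomial of an element of
`SL_n` over a finite field is `O(log n)`, uniformly in the field. -/
lemma sum_card_factors_charpoly_le {F : Type*} [Field F] [Fintype F] [DecidableEq F] {n : ℕ}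
    (hn : 1 ≤ n) :
    ∑ g : SpecialLinearGroup (Fin n) F,
        ((factors (Matrix.charpoly (g : Matrix (Fin n) (Fin n) F))).card : ℝ) ≤
      (4 + 2 * Real.log n) * Nat.card (SpecialLinearGroup (Fin n) F) := by
  set q : ℝ := (Nat.card F : ℝ) with hqdef
  have hq : (2 : ℝ) ≤ q := by rw [hqdef]; exact_mod_cast Finite.one_lt_card (α := F)
  set N : ℝ := (Nat.card (SpecialLinearGroup (Fin n) F) : ℝ) with hN
  set L : ℝ := 3 + 2 * Real.log n with hL
  choose f hf using fun x : SpecialLinearGroup (Fin n) F × (Fin n → F) =>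
    exists_isVectorMinpoly (x.1 : Matrix (Fin n) (Fin n) F) x.2
  have hdeg (x : SpecialLinearGroup (Fin n) F × (Fin n → F)) : (f x).natDegree ≤ n := by
    simpa using (hf x).natDegree_le
  let Y : Finset (SpecialLinearGroup (Fin n) F × (Fin n → F)) :=
    Finset.univ ×ˢ Finset.univ.erase 0
  let w (p : F[X]) : ℝ := (factors p).card + ((n : ℝ) - p.natDegree)
  let b (d : ℕ) : ℝ := if d < n then 1 else q - 1
  let C (d : ℕ) : Finset F := if d < n then Finset.univ.erase 0 else {(-1) ^ n}
  let T : Finset F[X] :=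
    (Finset.Icc 1 n).biUnion fun d => (C d).biUnion fun c => monicsWithConst d c
  have hC0 {d : ℕ} {c : F} (hc : c ∈ C d) : c ≠ 0 := by
    simp only [C] at hc
    split_ifs at hc
    · exact Finset.ne_of_mem_erase hc
    · rw [Finset.mem_singleton.1 hc]
      exact pow_ne_zero _ (neg_ne_zero.2 one_ne_zero)
  have hCb (d : ℕ) : (C d).card * b d = q - 1 := by
    simp only [C, b]
    split_ifs
    · rw [Finset.card_erase_of_mem (Finset.mem_univ _), Finset.card_univ,
        ← Nat.card_eq_fintype_card, Nat.cast_sub Finite.card_pos, hqdef]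
      simp
    · simp
  have hb0 (d : ℕ) : 0 ≤ b d := by
    simp only [b]
    split_ifs <;> linarith
  have hw0 {p : F[X]} (hp : p.natDegree ≤ n) : 0 ≤ w p := by
    have : (p.natDegree : ℝ) ≤ n := by exact_mod_cast hp
    have : (0 : ℝ) ≤ (factors p).card := Nat.cast_nonneg _
    simp only [w]
    linarith
  have hmemT {x : SpecialLinearGroup (Fin n) F × (Fin n → F)} (hx : x ∈ Y) : f x ∈ T := by
    have hv : x.2 ≠ 0 := by
      simpa [Y] using hx
    simp only [T, Finset.mem_biUnion, mem_monicsWithConst, Finset.mem_Icc]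
    refine ⟨_, ⟨Nat.one_le_iff_ne_zero.2 ((hf x).natDegree_ne_zero hv), hdeg x⟩, _, ?_,
      (hf x).1, rfl, rfl⟩
    simp only [C]
    split_ifs with hd
    · exact Finset.mem_erase.2 ⟨(hf x).coeff_zero_ne_zero (by simp), Finset.mem_univ _⟩
    · have := (hf x).coeff_zero_eq (by simpa using le_antisymm (hdeg x) (not_lt.1 hd))
      simpa using this
  have hTdeg {p : F[X]} (hp : p ∈ T) : p.natDegree ≤ n := by
    simp only [T, Finset.mem_biUnion, mem_monicsWithConst, Finset.mem_Icc] at hp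
    obtain ⟨_, hd, _, -, -, rfl, -⟩ := hp
    exact hd.2
  have hfiber (p : F[X]) : ((Y.filter (f · = p)).card : ℝ) ≤ b p.natDegree * N := by
    have h := ncard_setOf_isVectorMinpoly_le (ι := Fin n) p
    rw [Fintype.card_fin] at h
    have h1 : (Y.filter (f · = p)).card ≤ {x : SpecialLinearGroup (Fin n) F × (Fin n → F) |
        IsVectorMinpoly (x.1 : Matrix (Fin n) (Fin n) F) x.2 p}.ncard := by
      rw [← Set.ncard_coe_finset]
      refine Set.ncard_le_ncard (fun x hx => ?_) (Set.toFinite _)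
      obtain rfl := (Finset.mem_filter.1 hx).2
      exact hf x
    have h2 : ((Y.filter (f · = p)).card : ℝ) ≤
        (((if p.natDegree < n then 1 else Nat.card F - 1) : ℕ) : ℝ) * N := by
      rw [hN]
      exact_mod_cast h1.trans h
    refine h2.trans_eq ?_
    simp only [b]
    split_ifs
    · simp
    · rw [Nat.cast_sub Finite.card_pos, hqdef, Nat.cast_one]
  have hclass {d : ℕ} (hd : d ∈ Finset.Icc 1 n) {c : F} (hc : c ∈ C d) :
      ∑ p ∈ monicsWithConst d c, w p ≤ q ^ (d - 1) * (L + ((n : ℝ) - d)) := by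
    rw [Finset.mem_Icc] at hd
    have h1 := sum_card_factors_monicsWithConst_le (d := d) (hC0 hc)
    have h2 : ((monicsWithConst d c).card : ℝ) ≤ q ^ (d - 1) := by
      rw [hqdef]
      exact_mod_cast card_monicsWithConst_le d c
    have h3 : Real.log d ≤ Real.log n :=
      Real.log_le_log (by exact_mod_cast hd.1) (by exact_mod_cast hd.2)
    have h4 : (0 : ℝ) ≤ (n : ℝ) - d := sub_nonneg.2 (by exact_mod_cast hd.2)
    calc ∑ p ∈ monicsWithConst d c, w p
        = ∑ p ∈ monicsWithConst d c, ((factors p).card : ℝ) +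
            (monicsWithConst d c).card * ((n : ℝ) - d) := by
          rw [← nsmul_eq_mul, ← Finset.sum_const, ← Finset.sum_add_distrib]
          refine Finset.sum_congr rfl fun p hp => ?_
          simp only [w, (mem_monicsWithConst.1 hp).2.1]
      _ ≤ q ^ (d - 1) * (3 + 2 * Real.log d) + q ^ (d - 1) * ((n : ℝ) - d) :=
          add_le_add h1 (mul_le_mul_of_nonneg_right h2 h4)
      _ ≤ _ := by
          rw [← mul_add]
          refine mul_le_mul_of_nonneg_left ?_ (by positivity)
          rw [hL]
          linarith
  have hsumT : ∑ p ∈ T, b p.natDegree * N * w p ≤ N * ((q ^ n - 1) * (L + 1)) := by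
    have hdisj₁ : ((Finset.Icc 1 n : Finset ℕ) : Set ℕ).PairwiseDisjoint
        fun d => (C d).biUnion fun c => monicsWithConst d c := by
      intro d _ e _ hde
      rw [Function.onFun, Finset.disjoint_left]
      intro p hp hp'
      simp only [Finset.mem_biUnion, mem_monicsWithConst] at hp hp'
      obtain ⟨-, -, -, h, -⟩ := hp
      obtain ⟨-, -, -, h', -⟩ := hp'
      exact hde (h.symm.trans h')
    have hdisj₂ (d : ℕ) : (C d : Set F).PairwiseDisjoint fun c => monicsWithConst d c := by
      intro c _ e _ hce
      rw [Function.onFun, Finset.disjoint_left]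
      intro p hp hp'
      exact hce ((mem_monicsWithConst.1 hp).2.2.symm.trans (mem_monicsWithConst.1 hp').2.2)
    rw [Finset.sum_biUnion hdisj₁]
    calc ∑ d ∈ Finset.Icc 1 n, ∑ p ∈ (C d).biUnion fun c => monicsWithConst d c,
          b p.natDegree * N * w p
        ≤ ∑ d ∈ Finset.Icc 1 n, N * ((q - 1) * (q ^ (d - 1) * (L + ((n : ℝ) - d)))) := by
          refine Finset.sum_le_sum fun d hd => ?_
          rw [Finset.sum_biUnion (hdisj₂ d)]
          calc ∑ c ∈ C d, ∑ p ∈ monicsWithConst d c, b p.natDegree * N * w p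
              = ∑ c ∈ C d, b d * N * ∑ p ∈ monicsWithConst d c, w p := by
                refine Finset.sum_congr rfl fun c _ => ?_
                rw [Finset.mul_sum]
                refine Finset.sum_congr rfl fun p hp => ?_
                rw [(mem_monicsWithConst.1 hp).2.1]
            _ ≤ ∑ c ∈ C d, b d * N * (q ^ (d - 1) * (L + ((n : ℝ) - d))) := by
                refine Finset.sum_le_sum fun c hc => mul_le_mul_of_nonneg_left (hclass hd hc) ?_
                exact mul_nonneg (hb0 d) (Nat.cast_nonneg _)
            _ = _ := by
                rw [Finset.sum_const, nsmul_eq_mul, ← hCb d]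
                ring
      _ = N * (L * ((q - 1) * ∑ d ∈ Finset.Icc 1 n, q ^ (d - 1)) +
            (q - 1) * ∑ d ∈ Finset.Icc 1 n, q ^ (d - 1) * ((n : ℝ) - d)) := by
          simp only [Finset.mul_sum, ← Finset.sum_add_distrib]
          refine Finset.sum_congr rfl fun d _ => ?_
          ring
      _ ≤ N * ((q ^ n - 1) * (L + 1)) := by
          refine mul_le_mul_of_nonneg_left ?_ (Nat.cast_nonneg _)
          rw [sub_one_mul_sum_pow]
          linarith [sub_one_mul_sum_pow_mul_le hq n]
  have hqn : 0 < q ^ n - 1 := sub_pos.2 (one_lt_pow₀ (by linarith) (by omega))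
  have hcardV : (((Finset.univ : Finset (Fin n → F)).erase 0).card : ℝ) = q ^ n - 1 := by
    rw [Finset.card_erase_of_mem (Finset.mem_univ _), Finset.card_univ, Fintype.card_pi_const,
      ← Nat.card_eq_fintype_card, Nat.cast_sub (Nat.one_le_pow _ _ Finite.card_pos)]
    simp [hqdef]
  have hmain : (q ^ n - 1) * ∑ g : SpecialLinearGroup (Fin n) F,
        ((factors (Matrix.charpoly (g : Matrix (Fin n) (Fin n) F))).card : ℝ) ≤
      N * ((q ^ n - 1) * (L + 1)) := by
    calc _ = ∑ x ∈ Y, ((factors (Matrix.charpoly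
            (x.1 : Matrix (Fin n) (Fin n) F))).card : ℝ) := by
          rw [Finset.sum_product, Finset.mul_sum]
          refine Finset.sum_congr rfl fun g _ => ?_
          rw [← hcardV, ← nsmul_eq_mul]
          exact (Finset.sum_const _).symm
      _ ≤ ∑ x ∈ Y, w (f x) := by
          refine Finset.sum_le_sum fun x _ => ?_
          have h := (hf x).card_factors_charpoly_le
          rw [Fintype.card_fin] at h
          simp only [w]
          rw [← Nat.cast_sub (hdeg x)]
          exact_mod_cast h
      _ = ∑ p ∈ T, ((Y.filter (f · = p)).card : ℝ) * w p := by
          rw [← Finset.sum_fiberwise_of_maps_to (fun x hx => hmemT hx)]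
          refine Finset.sum_congr rfl fun p _ => ?_
          rw [← nsmul_eq_mul, ← Finset.sum_const]
          exact Finset.sum_congr rfl fun x hx => by rw [(Finset.mem_filter.1 hx).2]
      _ ≤ ∑ p ∈ T, b p.natDegree * N * w p :=
          Finset.sum_le_sum fun p hp =>
            mul_le_mul_of_nonneg_right (hfiber p) (hw0 (hTdeg hp))
      _ ≤ _ := hsumT
  have : (4 + 2 * Real.log n) * N = N * (L + 1) := by rw [hL]; ring
  rw [this]
  refine le_of_mul_le_mul_left (hmain.trans_eq ?_) hqn
  ring

end Average


/-- For every `ε > 0` there exists `k` such that for every finite field `F_q` and every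
`n ≥ 2`, the set of `g ∈ SL_n(F_q)` whose characteristic polynomial has at least
`k log n` monic irreducible factors (with multiplicity) has cardinality at most
`ε |SL_n(F_q)|`. -/
theorem few_elements_with_many_factors (ε : ℝ) (hε : 0 < ε) :
    ∃ k : ℝ, ∀ (F : Type) [Field F] [Fintype F] (n : ℕ), 2 ≤ n →
      (Set.ncard {g : Matrix.SpecialLinearGroup (Fin n) F |
          k * Real.log n ≤
            ((UniqueFactorizationMonoid.factors
              (Matrix.charpoly (g : Matrix (Fin n) (Fin n) F))).card : ℝ)} : ℝ) ≤
        ε * (Nat.card (Matrix.SpecialLinearGroup (Fin n) F) : ℝ) := by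
  refine ⟨8 / ε, fun F _ _ n hn => ?_⟩
  classical
  set G := Matrix.SpecialLinearGroup (Fin n) F
  let Ω (g : G) : ℝ := (factors (Matrix.charpoly (g : Matrix (Fin n) (Fin n) F))).card
  have hlog : Real.log 2 ≤ Real.log n := Real.log_le_log two_pos (by exact_mod_cast hn)
  have hlog2 := Real.log_two_gt_d9
  have hpos : 0 < Real.log n := by linarith
  have hset : {g : G | 8 / ε * Real.log n ≤ Ω g} =
      (Finset.univ.filter fun g : G => 8 / ε * Real.log n ≤ Ω g : Finset G) := by
    ext g
    simp
  change (Set.ncard {g : G | 8 / ε * Real.log n ≤ Ω g} : ℝ) ≤ _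
  rw [hset, Set.ncard_coe_finset]
  set B := Finset.univ.filter fun g : G => 8 / ε * Real.log n ≤ Ω g
  have h1 : B.card * (8 / ε * Real.log n) ≤ ∑ g : G, Ω g := by
    rw [← nsmul_eq_mul]
    refine (Finset.card_nsmul_le_sum B Ω _ fun g hg => (Finset.mem_filter.1 hg).2).trans ?_
    exact Finset.sum_le_sum_of_subset_of_nonneg (Finset.subset_univ _)
      fun _ _ _ => Nat.cast_nonneg _
  have h2 : ∑ g : G, Ω g ≤ 8 * Real.log n * Nat.card G :=
    (sum_card_factors_charpoly_le (by omega)).trans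
      (mul_le_mul_of_nonneg_right (by linarith) (Nat.cast_nonneg _))
  have h3 : (B.card : ℝ) * (8 * Real.log n) ≤ ε * Nat.card G * (8 * Real.log n) := by
    calc (B.card : ℝ) * (8 * Real.log n) = ε * (B.card * (8 / ε * Real.log n)) := by
          field_simp
      _ ≤ ε * (8 * Real.log n * Nat.card G) :=
          mul_le_mul_of_nonneg_left (h1.trans h2) hε.le
      _ = _ := by ring
  exact le_of_mul_le_mul_right h3 (by positivity)
end
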